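/- arXiv:1504.07290 — 8 statements merged into one kernel-verified Lean document; each statement's English description precedes it below -/
import Mathlib

section
/- There exists an edge-coloring of the complete graph on N = 3432 = C(14,7) vertices with colors in L = {r, b₀, b₁} that is good with respect to M₂. Consequently, f(2) := min{N : M₂ is realizable on K_N} satisfies f(2) ≤ 3432. -/
/-- The three colors: red `r` and the two blues `b0`, `b1`. -/
inductive Color where
  | r : Color
  | b0 : Color
  | b1 : Color
  deriving DecidableEq

/-- `M₂ = L³ \ {b₀,b₁}³`: the triples of colors that are not all blue. -/
def M2 (t : Color × Color × Color) : Prop :=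
  ¬ ((t.1 = Color.b0 ∨ t.1 = Color.b1) ∧ (t.2.1 = Color.b0 ∨ t.2.1 = Color.b1) ∧
     (t.2.2 = Color.b0 ∨ t.2.2 = Color.b1))

/-- `c` is an edge-coloring (symmetric) of the complete graph on `V` that is good with
respect to `M₂`, i.e. it satisfies conditions (i), (ii) and (iii). Here
`c(xyz) = (c(xy), c(yz), c(xz))`. -/
def Good {V : Type*} (c : V → V → Color) : Prop :=
  (∀ x y : V, x ≠ y → c x y = c y x) ∧
  -- (i)
  (∀ x y : V, x ≠ y → ∀ j k : Color, M2 (c x y, j, k) →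
    ∃ z : V, z ≠ x ∧ z ≠ y ∧ c y z = j ∧ c x z = k) ∧
  -- (ii)
  (∀ x y z : V, x ≠ y → y ≠ z → x ≠ z → M2 (c x y, c y z, c x z)) ∧
  -- (iii)
  (∀ x : V, ∀ ℓ : Color, ∃ y : V, y ≠ x ∧ c x y = ℓ)

/- Take the `7`-subsets of a `14`-set as vertices and color `xy` red when `3 ≤ |x ∩ y|`; three
`7`-sets meeting pairwise in at most two points would cover at least `15` points, so no triangle is
all blue. A blue edge is colored by the subgraph that a fixed graph `G` on the `14` points induces
on `x ∩ y`: `b0` when it is a point or an edge, `b1` when it is empty or a non-edge. If both `G` and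
its complement have an edge inside every `4`-set and between any disjoint `3`-set and `4`-set, then
all prescribed triangles can be completed; fourteen vertices of the Paley graph of order `17` are
such a `G`. -/

open Finset

section Spread

variable {α : Type*}

/-- `H` has an edge inside every set of four vertices and between any disjoint sets of three and
of four vertices. Equivalently, the complement of `H` contains neither `K₄` nor `K₃,₄`. -/
structure IsSpread (H : SimpleGraph α) : Prop where
  exists_adj_mem : ∀ s : Finset α, 4 ≤ #s → ∃ p ∈ s, ∃ q ∈ s, H.Adj p q
  exists_adj_between : ∀ s t : Finset α, Disjoint s t → 3 ≤ #s → 4 ≤ #t →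
    ∃ p ∈ s, ∃ q ∈ t, H.Adj p q

variable {H : SimpleGraph α}

theorem IsSpread.exists_adj_of_notMem (hH : IsSpread H) {s : Finset α} (hs : 3 ≤ #s)
    (hind : ∀ a ∈ s, ∀ b ∈ s, ¬ H.Adj a b) {p : α} (hp : p ∉ s) : ∃ a ∈ s, H.Adj p a := by
  obtain ⟨u, hu, v, hv, huv⟩ := hH.exists_adj_mem (cons p s hp) (by rw [card_cons]; lia)
  rw [mem_cons] at hu hv
  rcases hu with rfl | hu <;> rcases hv with rfl | hv
  · exact (H.irrefl huv).elim
  · exact ⟨v, hv, huv⟩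
  · exact ⟨u, hu, huv.symm⟩
  · exact (hind u hu v hv huv).elim

theorem IsSpread.not_adj_of_forall_adj (hH : IsSpread H) (hH' : IsSpread Hᶜ) {s t : Finset α}
    (hs : 4 ≤ #s) (hst : ∀ a ∈ s, ∀ b ∈ t, H.Adj a b) {b b' : α} (hb : b ∈ t) (hb' : b' ∈ t) :
    ¬ H.Adj b b' := by
  classical
  intro hbb'
  obtain ⟨a, ha, a', ha', haa'⟩ := hH.exists_adj_mem s hs
  have hab := hst a ha b hb
  have hab' := hst a ha b' hb'
  have ha'b := hst a' ha' b hb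
  have ha'b' := hst a' ha' b' hb'
  have hcard : #{a, a', b, b'} = 4 := by
    grind [haa'.ne, hab.ne, hab'.ne, ha'b.ne, ha'b'.ne, hbb'.ne]
  obtain ⟨u, hu, v, hv, huv⟩ := hH'.exists_adj_mem {a, a', b, b'} hcard.ge
  rw [SimpleGraph.compl_adj] at huv
  simp only [mem_insert, mem_singleton] at hu hv
  rcases hu with rfl | rfl | rfl | rfl <;> rcases hv with rfl | rfl | rfl | rfl <;>
    simp_all [H.adj_comm]

theorem IsSpread.of_forall_lt [LinearOrder α] [Fintype α] [DecidableRel H.Adj]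
    (h₄ : ∀ a b, a < b → ∀ c, b < c → ∀ d, c < d →
      H.Adj a b ∨ H.Adj a c ∨ H.Adj a d ∨ H.Adj b c ∨ H.Adj b d ∨ H.Adj c d)
    (h₃₄ : ∀ a b, a < b → ∀ c, b < c →
      #{v | v ∉ ({a, b, c} : Finset α) ∧ ¬ H.Adj a v ∧ ¬ H.Adj b v ∧ ¬ H.Adj c v} < 4) :
    IsSpread H where
  exists_adj_mem s hs := by
    obtain ⟨t, hts, ht⟩ := exists_subset_card_eq hs
    let f := t.orderEmbOfFin ht
    have hf (i : Fin 4) : f i ∈ s := hts (t.orderEmbOfFin_mem ht i)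
    have hlt {i j : Fin 4} (hij : i < j) : f i < f j := f.strictMono hij
    have := h₄ (f 0) (f 1) (hlt (by decide)) (f 2) (hlt (by decide)) (f 3) (hlt (by decide))
    grind
  exists_adj_between s t hst hs ht := by
    by_contra! hno
    obtain ⟨u, hus, hu⟩ := exists_subset_card_eq hs
    let f := u.orderEmbOfFin hu
    have hf (i : Fin 3) : f i ∈ s := hus (u.orderEmbOfFin_mem hu i)
    have hlt {i j : Fin 3} (hij : i < j) : f i < f j := f.strictMono hij
    refine (h₃₄ (f 0) (f 1) (hlt (by decide)) (f 2) (hlt (by decide))).not_ge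
      (ht.trans (card_le_card fun v hv ↦ ?_))
    have hvs : v ∉ s := disjoint_right.1 hst hv
    simp only [mem_filter, mem_univ, true_and]
    grind

end Spread

section Coloring

variable {α : Type*}

/-- The pairs of points that are given the color `k`; no pair is red. -/
def colorGraph (G : SimpleGraph α) : Color → SimpleGraph α
  | .r => ⊥
  | .b0 => G
  | .b1 => Gᶜ

theorem isSpread_colorGraph {G : SimpleGraph α} (hG : IsSpread G) (hG' : IsSpread Gᶜ)
    {k : Color} (hk : k ≠ .r) : IsSpread (colorGraph G k) := by
  cases k
  exacts [(hk rfl).elim, hG, hG']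

variable [DecidableEq α]

open scoped Classical in
/-- The color of an edge `xy` of the complete graph on `7`-sets, as a function of `s = x ∩ y`.
A set of at most two points is blue, and it is `b0` exactly when it induces a connected subgraph of
`G`. -/
noncomputable def intersectionColor (G : SimpleGraph α) (s : Finset α) : Color :=
  if 3 ≤ #s then .r else if s.Nonempty ∧ G.IsClique s then .b0 else .b1

variable {G : SimpleGraph α}

theorem intersectionColor_eq_r_iff {s : Finset α} : intersectionColor G s = .r ↔ 3 ≤ #s := by
  unfold intersectionColor
  split_ifs <;> simp_all

theorem intersectionColor_empty : intersectionColor G ∅ = .b1 := by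
  simp [intersectionColor]

theorem intersectionColor_singleton (p : α) : intersectionColor G {p} = .b0 := by
  simp [intersectionColor]

theorem intersectionColor_pair {k : Color} {p q : α} (h : (colorGraph G k).Adj p q) :
    intersectionColor G {p, q} = k := by
  have hcard : ¬ 3 ≤ #{p, q} := by have := card_le_two (a := p) (b := q); lia
  cases k <;> simp_all [colorGraph, intersectionColor]

/-- The vertices of the coloring: the `7`-subsets of `α`. -/
abbrev Heptad (α : Type*) := {x : Finset α // #x = 7}

/-- The coloring of the complete graph on `Heptad α` determined by `G`. -/
noncomputable def heptadColoring (G : SimpleGraph α) (x y : Heptad α) : Color :=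
  intersectionColor G (x.1 ∩ y.1)

theorem heptadColoring_comm (x y : Heptad α) : heptadColoring G x y = heptadColoring G y x := by
  rw [heptadColoring, inter_comm, heptadColoring]

theorem ne_of_heptadColoring_ne_r {x z : Heptad α} (h : heptadColoring G x z ≠ .r) : z ≠ x := by
  rintro rfl
  refine h (intersectionColor_eq_r_iff.2 ?_)
  rw [inter_self, z.2]
  lia

end Coloring

section Cardinality

variable {α : Type*} [DecidableEq α]

theorem Heptad.card_sdiff_add_card_inter (x y : Heptad α) : #(x.1 \ y.1) + #(x.1 ∩ y.1) = 7 := by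
  rw [Finset.card_sdiff_add_card_inter, x.2]

theorem Heptad.card_inter_lt {x y : Heptad α} (hxy : x ≠ y) : #(x.1 ∩ y.1) < 7 := by
  by_contra! h
  have hx : x.1 ∩ y.1 = x.1 := eq_of_subset_of_card_le inter_subset_left (by rwa [x.2])
  have hy : x.1 ∩ y.1 = y.1 := eq_of_subset_of_card_le inter_subset_right (by rwa [y.2])
  exact hxy (Subtype.ext (hx.symm.trans hy))

variable [Fintype α]

theorem exists_card_eq_inter_eq_inter_eq {x y s t : Finset α} {n : ℕ} (hs : s ⊆ x) (ht : t ⊆ y)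
    (hst : s ∩ y = t ∩ x) (hle : #(s ∪ t) ≤ n) (hge : n ≤ #(s ∪ t) + #(x ∪ y)ᶜ) :
    ∃ z, #z = n ∧ x ∩ z = s ∧ y ∩ z = t := by
  have hdisj : Disjoint (s ∪ t) (x ∪ y)ᶜ :=
    disjoint_compl_right_iff.2 (union_subset_union hs ht)
  obtain ⟨z, hstz, hz, hzn⟩ := exists_subsuperset_card_eq
    (subset_union_left (s₁ := s ∪ t) (s₂ := (x ∪ y)ᶜ)) hle (by rwa [card_union_of_disjoint hdisj])
  have hst' (p : α) : p ∈ s ∧ p ∈ y ↔ p ∈ t ∧ p ∈ x := by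
    rw [← mem_inter, hst, mem_inter]
  have hz' (p : α) : p ∈ z → p ∈ s ∨ p ∈ t ∨ (p ∉ x ∧ p ∉ y) := by
    intro hp
    simpa [or_assoc] using hz hp
  refine ⟨z, hzn, ?_, ?_⟩ <;> ext p <;> grind

theorem Heptad.card_compl_union (hα : Fintype.card α = 14) (x y : Heptad α) :
    #(x.1 ∪ y.1)ᶜ = #(x.1 ∩ y.1) := by
  have := card_union_add_card_inter x.1 y.1
  have := card_add_card_compl (x.1 ∪ y.1)
  have := x.2
  have := y.2
  lia

end Cardinality

section Apex

variable {V : Type*}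

/-- The edge `xy` is completed by some `z` to a triangle whose edges `xz` and `yz` have the colors
`j` and `k`. -/
def HasApex (c : V → V → Color) (x y : V) (j k : Color) : Prop :=
  ∃ z, z ≠ x ∧ z ≠ y ∧ c x z = j ∧ c y z = k

theorem HasApex.symm {c : V → V → Color} {x y : V} {j k : Color} (h : HasApex c x y j k) :
    HasApex c y x k j := by
  obtain ⟨z, hzx, hzy, hxz, hyz⟩ := h
  exact ⟨z, hzy, hzx, hyz, hxz⟩

theorem M2_iff {i j k : Color} : M2 (i, j, k) ↔ i = .r ∨ j = .r ∨ k = .r := by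
  cases i <;> cases j <;> cases k <;> simp [M2]

theorem good_of_hasApex [Nontrivial V] {c : V → V → Color} (hcomm : ∀ x y, c x y = c y x)
    (hapex : ∀ x y, x ≠ y → ∀ j k, M2 (c x y, j, k) → HasApex c x y k j)
    (htri : ∀ x y z, M2 (c x y, c y z, c x z)) : Good c := by
  refine ⟨fun x y _ ↦ hcomm x y, fun x y hxy j k h ↦ ?_, fun x y z _ _ _ ↦ htri x y z,
    fun x l ↦ ?_⟩
  · obtain ⟨z, hzx, hzy, hxz, hyz⟩ := hapex x y hxy j k h
    exact ⟨z, hzx, hzy, hyz, hxz⟩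
  · obtain ⟨y, hy⟩ := exists_ne x
    obtain ⟨z, hzx, -, hxz, -⟩ := hapex x y hy.symm .r l (by simp [M2_iff])
    exact ⟨z, hzx, hxz⟩

theorem Good.comp_equiv {W : Type*} {c : V → V → Color} (hc : Good c) (e : W ≃ V) :
    Good fun x y ↦ c (e x) (e y) := by
  obtain ⟨hcomm, hapex, htri, hcol⟩ := hc
  refine ⟨fun x y h ↦ hcomm _ _ (e.injective.ne h), fun x y h j k hM ↦ ?_,
    fun x y z hxy hyz hxz ↦ htri _ _ _ (e.injective.ne hxy) (e.injective.ne hyz)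
      (e.injective.ne hxz), fun x l ↦ ?_⟩
  · simpa [e.surjective.exists] using hapex _ _ (e.injective.ne h) j k hM
  · simpa [e.surjective.exists] using hcol (e x) l

end Apex

section Completion

variable {α : Type*} [DecidableEq α] {G : SimpleGraph α} {x y : Heptad α}

theorem hasApex_r_r_of_card_inter {u : Finset α} (hu : #u ≤ 7) (hux : ¬ u ⊆ x.1)
    (huy : ¬ u ⊆ y.1) (hxu : 3 ≤ #(x.1 ∩ u)) (hyu : 3 ≤ #(y.1 ∩ u)) :
    HasApex (heptadColoring G) x y .r .r := by
  obtain ⟨z, huz, -, hz⟩ := exists_subsuperset_card_eq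
    (subset_union_left (s₁ := u) (s₂ := x.1)) hu (x.2.ge.trans (card_le_card subset_union_right))
  have hred {w : Heptad α} (hw : 3 ≤ #(w.1 ∩ u)) : intersectionColor G (w.1 ∩ z) = .r :=
    intersectionColor_eq_r_iff.2 (hw.trans (card_le_card (inter_subset_inter_left huz)))
  refine ⟨⟨z, hz⟩, ?_, ?_, hred hxu, hred hyu⟩
  · rintro rfl
    exact hux huz
  · rintro rfl
    exact huy huz

theorem hasApex_r_r (hxy : x ≠ y) : HasApex (heptadColoring G) x y .r .r := by
  have hA := x.card_sdiff_add_card_inter y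
  have hB := y.card_sdiff_add_card_inter x
  have hlt := Heptad.card_inter_lt hxy
  have hx := x.2
  have hy := y.2
  rw [inter_comm] at hB
  obtain ⟨a, ha⟩ := card_pos.1 (show 0 < #(x.1 \ y.1) by lia)
  obtain ⟨b, hb⟩ := card_pos.1 (show 0 < #(y.1 \ x.1) by lia)
  rw [mem_sdiff] at ha hb
  obtain ⟨s, has, hsx, hs3⟩ := exists_subsuperset_card_eq (n := 3)
    (singleton_subset_iff.2 ha.1) (by simp) (by lia)
  obtain ⟨t, hbt, hty, ht3⟩ := exists_subsuperset_card_eq (n := 3)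
    (singleton_subset_iff.2 hb.1) (by simp) (by lia)
  have hxu : s ⊆ x.1 ∩ (s ∪ t) := subset_inter hsx subset_union_left
  have hyu : t ⊆ y.1 ∩ (s ∪ t) := subset_inter hty subset_union_right
  have := card_union_le s t
  exact hasApex_r_r_of_card_inter (by lia) (by grind) (by grind)
    (hs3 ▸ card_le_card hxu) (ht3 ▸ card_le_card hyu)

variable [Fintype α]

theorem hasApex_blue_r_of_adj (hα : Fintype.card α = 14) {k : Color} (hk : k ≠ .r) {p q : α}
    (hp : p ∈ x.1) (hq : q ∈ x.1) (hpq : (colorGraph G k).Adj p q) (hne : x.1 ∩ y.1 ≠ {p, q})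
    {t : Finset α} (htx : Disjoint t x.1) (ht : #t ≤ 5) (hred : 3 ≤ #(y.1 ∩ ({p, q} ∪ t))) :
    HasApex (heptadColoring G) x y k .r := by
  have hle : #({p, q} ∪ t) ≤ 7 := by
    have := card_union_le {p, q} t
    have := card_le_two (a := p) (b := q)
    lia
  have hge : 7 ≤ #({p, q} ∪ x.1ᶜ) := by
    have := card_add_card_compl x.1
    have := x.2
    exact le_trans (by lia) (card_le_card subset_union_right)
  obtain ⟨z, htz, hz, hz7⟩ := exists_subsuperset_card_eq
    (union_subset_union_right (subset_compl_iff_disjoint_right.2 htx)) hle hge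
  have hxz : x.1 ∩ z = {p, q} := by grind [mem_compl]
  have hcx : heptadColoring G x ⟨z, hz7⟩ = k := by
    rw [heptadColoring, hxz, intersectionColor_pair hpq]
  refine ⟨⟨z, hz7⟩, ne_of_heptadColoring_ne_r (hcx.trans_ne hk), ?_, hcx,
    intersectionColor_eq_r_iff.2 (hred.trans (card_le_card (inter_subset_inter_left htz)))⟩
  rintro rfl
  exact hne hxz

theorem hasApex_blue_r (hα : Fintype.card α = 14) {k : Color} (hk : k ≠ .r)
    (hG : IsSpread (colorGraph G k)) (hxy : x ≠ y) : HasApex (heptadColoring G) x y k .r := by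
  have hA := x.card_sdiff_add_card_inter y
  have hB := y.card_sdiff_add_card_inter x
  have hlt := Heptad.card_inter_lt hxy
  rw [inter_comm] at hB
  rcases lt_or_ge #(x.1 ∩ y.1) 4 with ht | ht
  · obtain ⟨p, hp, q, hq, hpq⟩ := hG.exists_adj_mem (x.1 \ y.1) (by lia)
    obtain ⟨t, hty, ht3⟩ := exists_subset_card_eq (show 3 ≤ #(y.1 \ x.1) by lia)
    have hsub : t ⊆ y.1 ∩ ({p, q} ∪ t) := by grind
    exact hasApex_blue_r_of_adj hα hk (by grind) (by grind) hpq (by grind)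
      (disjoint_of_subset_left hty sdiff_disjoint) (by lia) (ht3 ▸ card_le_card hsub)
  · obtain ⟨p, hp, q, hq, hpq⟩ := hG.exists_adj_mem (x.1 ∩ y.1) (by lia)
    obtain ⟨b, hb⟩ := card_pos.1 (show 0 < #(y.1 \ x.1) by lia)
    have hpq' := hpq.ne
    have hne : x.1 ∩ y.1 ≠ {p, q} := by
      intro h
      have := card_le_two (a := p) (b := q)
      lia
    have hsub : {p, q, b} ⊆ y.1 ∩ ({p, q} ∪ {b}) := by grind
    have hcard : #{p, q, b} = 3 := by grind
    exact hasApex_blue_r_of_adj hα hk (by grind) (by grind) hpq hne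
      (disjoint_singleton_left.2 (by grind)) (by simp) (hcard ▸ card_le_card hsub)

theorem hasApex_of_traces (hα : Fintype.card α = 14) {s t : Finset α} {j k : Color} (hj : j ≠ .r)
    (hk : k ≠ .r) (hs : s ⊆ x.1) (ht : t ⊆ y.1) (hst : s ∩ y.1 = t ∩ x.1) (hle : #(s ∪ t) ≤ 7)
    (hge : 7 ≤ #(s ∪ t) + #(x.1 ∩ y.1)) (hsj : intersectionColor G s = j)
    (htk : intersectionColor G t = k) : HasApex (heptadColoring G) x y j k := by
  obtain ⟨z, hz7, hxz, hyz⟩ := exists_card_eq_inter_eq_inter_eq hs ht hst hle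
    (by rwa [x.card_compl_union hα y])
  have hcx : heptadColoring G x ⟨z, hz7⟩ = j := by rw [heptadColoring, hxz, hsj]
  have hcy : heptadColoring G y ⟨z, hz7⟩ = k := by rw [heptadColoring, hyz, htk]
  exact ⟨⟨z, hz7⟩, ne_of_heptadColoring_ne_r (hcx.trans_ne hj),
    ne_of_heptadColoring_ne_r (hcy.trans_ne hk), hcx, hcy⟩

theorem hasApex_of_adj_sdiff (hα : Fintype.card α = 14) {j k : Color} (hj : j ≠ .r) (hk : k ≠ .r)
    (ht : 3 ≤ #(x.1 ∩ y.1))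
    (hA : ∃ a ∈ x.1 \ y.1, ∃ a' ∈ x.1 \ y.1, (colorGraph G j).Adj a a')
    (hB : ∃ b ∈ y.1 \ x.1, ∃ b' ∈ y.1 \ x.1, (colorGraph G k).Adj b b') :
    HasApex (heptadColoring G) x y j k := by
  obtain ⟨a, ha, a', ha', haa'⟩ := hA
  obtain ⟨b, hb, b', hb', hbb'⟩ := hB
  have := haa'.ne
  have := hbb'.ne
  have hcard : #({a, a'} ∪ {b, b'}) = 4 := by grind
  exact hasApex_of_traces hα hj hk (by grind) (by grind) (by grind) (by lia) (by lia)
    (intersectionColor_pair haa') (intersectionColor_pair hbb')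

theorem hasApex_of_adj_inter (hα : Fintype.card α = 14) {j k : Color} (hj : j ≠ .r) (hk : k ≠ .r)
    (ht : 4 ≤ #(x.1 ∩ y.1)) {p a b : α} (hp : p ∈ x.1 ∩ y.1) (ha : a ∈ x.1 \ y.1)
    (hb : b ∈ y.1 \ x.1) (hpa : (colorGraph G j).Adj p a) (hpb : (colorGraph G k).Adj p b) :
    HasApex (heptadColoring G) x y j k := by
  have hcard : #({p, a} ∪ {p, b}) = 3 := by grind
  exact hasApex_of_traces hα hj hk (by grind) (by grind) (by grind) (by lia) (by lia)
    (intersectionColor_pair hpa) (intersectionColor_pair hpb)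

theorem hasApex_of_forall_not_adj_sdiff (hα : Fintype.card α = 14) {j k : Color} (hj : j ≠ .r)
    (hk : k ≠ .r) (hGj : IsSpread (colorGraph G j)) (hGk : IsSpread (colorGraph G k))
    (ht : #(x.1 ∩ y.1) = 4) (hB : ∀ b ∈ y.1 \ x.1, ∀ b' ∈ y.1 \ x.1, ¬ (colorGraph G k).Adj b b') :
    HasApex (heptadColoring G) x y j k := by
  have hcA := x.card_sdiff_add_card_inter y
  have hcB := y.card_sdiff_add_card_inter x
  rw [inter_comm] at hcB
  obtain ⟨a, ha, p, hp, hap⟩ := hGj.exists_adj_between (x.1 \ y.1) (x.1 ∩ y.1)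
    (disjoint_sdiff_inter _ _) (by lia) (by lia)
  obtain ⟨b, hb, hpb⟩ := hGk.exists_adj_of_notMem (s := y.1 \ x.1) (by lia) hB (p := p) (by grind)
  exact hasApex_of_adj_inter hα hj hk (by lia) hp ha hb hap.symm hpb

theorem hasApex_of_card_inter_le_four (hα : Fintype.card α = 14) {j k : Color} (hj : j ≠ .r)
    (hk : k ≠ .r) (hGj : IsSpread (colorGraph G j)) (hGk : IsSpread (colorGraph G k))
    (ht : 3 ≤ #(x.1 ∩ y.1)) (ht' : #(x.1 ∩ y.1) ≤ 4) : HasApex (heptadColoring G) x y j k := by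
  have hcA := x.card_sdiff_add_card_inter y
  have hcB := y.card_sdiff_add_card_inter x
  rw [inter_comm] at hcB
  rcases ht.eq_or_lt' with ht | ht
  · exact hasApex_of_adj_sdiff hα hj hk ht.ge (hGj.exists_adj_mem _ (by lia))
      (hGk.exists_adj_mem _ (by lia))
  · by_cases hB : ∃ b ∈ y.1 \ x.1, ∃ b' ∈ y.1 \ x.1, (colorGraph G k).Adj b b'
    · by_cases hA : ∃ a ∈ x.1 \ y.1, ∃ a' ∈ x.1 \ y.1, (colorGraph G j).Adj a a'
      · exact hasApex_of_adj_sdiff hα hj hk (by lia) hA hB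
      · push Not at hA
        exact (hasApex_of_forall_not_adj_sdiff hα hk hj hGk hGj (by rw [inter_comm]; lia) hA).symm
    · push Not at hB
      exact hasApex_of_forall_not_adj_sdiff hα hj hk hGj hGk (by lia) hB

theorem hasApex_self (hα : Fintype.card α = 14) {k : Color} (hk : k ≠ .r)
    (hG : IsSpread (colorGraph G k)) (ht : 5 ≤ #(x.1 ∩ y.1)) :
    HasApex (heptadColoring G) x y k k := by
  obtain ⟨p, hp, q, hq, hpq⟩ := hG.exists_adj_mem (x.1 ∩ y.1) (by lia)
  have := hpq.ne
  have hcard : #({p, q} ∪ {p, q}) = 2 := by grind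
  exact hasApex_of_traces hα hk hk (by grind) (by grind) (by grind) (by lia) (by lia)
    (intersectionColor_pair hpq) (intersectionColor_pair hpq)

theorem hasApex_b0_b1 (hα : Fintype.card α = 14) (hG : IsSpread G) (hG' : IsSpread Gᶜ)
    (hxy : x ≠ y) (ht : 5 ≤ #(x.1 ∩ y.1)) : HasApex (heptadColoring G) x y .b0 .b1 := by
  have hA := x.card_sdiff_add_card_inter y
  have hB := y.card_sdiff_add_card_inter x
  have hlt := Heptad.card_inter_lt hxy
  rw [inter_comm] at hB
  have hb0 : Color.b0 ≠ .r := by decide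
  have hb1 : Color.b1 ≠ .r := by decide
  obtain ⟨a, ha⟩ := card_pos.1 (show 0 < #(x.1 \ y.1) by lia)
  by_cases hcb : ∃ c ∈ x.1 ∩ y.1, ∃ b ∈ y.1 \ x.1, ¬ G.Adj c b
  · obtain ⟨c, hc, b, hb, hcb⟩ := hcb
    have hadj : (colorGraph G .b1).Adj c b := ⟨by grind, hcb⟩
    have hcard : #({c} ∪ {c, b}) = 2 := by grind
    exact hasApex_of_traces hα hb0 hb1 (by grind) (by grind) (by grind) (by lia) (by lia)
      (intersectionColor_singleton c) (intersectionColor_pair hadj)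
  push Not at hcb
  rcases le_or_gt #(y.1 \ x.1) 1 with hle | hgt
  · have hcard : #({a} ∪ ∅) = 1 := by simp
    exact hasApex_of_traces hα hb0 hb1 (by grind) (by grind) (by grind) (by lia) (by lia)
      (intersectionColor_singleton a) intersectionColor_empty
  · obtain ⟨b, hb, b', hb', hbb'⟩ := one_lt_card.1 hgt
    have hadj : (colorGraph G .b1).Adj b b' :=
      ⟨hbb', hG.not_adj_of_forall_adj hG' (by lia) hcb hb hb'⟩
    have hcard : #({a} ∪ {b, b'}) = 3 := by grind
    exact hasApex_of_traces hα hb0 hb1 (by grind) (by grind) (by grind) (by lia) (by lia)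
      (intersectionColor_singleton a) (intersectionColor_pair hadj)

theorem hasApex_of_three_le_card_inter (hα : Fintype.card α = 14) (hG : IsSpread G)
    (hG' : IsSpread Gᶜ) (hxy : x ≠ y) (ht : 3 ≤ #(x.1 ∩ y.1)) {j k : Color} (hj : j ≠ .r)
    (hk : k ≠ .r) : HasApex (heptadColoring G) x y j k := by
  have hspread {i : Color} (hi : i ≠ .r) := isSpread_colorGraph hG hG' hi
  rcases le_or_gt #(x.1 ∩ y.1) 4 with ht' | ht'
  · exact hasApex_of_card_inter_le_four hα hj hk (hspread hj) (hspread hk) ht ht'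
  rcases eq_or_ne j k with rfl | hjk
  · exact hasApex_self hα hj (hspread hj) ht'
  cases j <;> cases k <;> try contradiction
  · exact hasApex_b0_b1 hα hG hG' hxy ht'
  · exact (hasApex_b0_b1 hα hG hG' hxy.symm (by rwa [inter_comm])).symm

theorem hasApex_heptadColoring (hα : Fintype.card α = 14) (hG : IsSpread G) (hG' : IsSpread Gᶜ)
    (hxy : x ≠ y) {j k : Color} (h : M2 (heptadColoring G x y, k, j)) :
    HasApex (heptadColoring G) x y j k := by
  have hspread {i : Color} (hi : i ≠ .r) := isSpread_colorGraph hG hG' hi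
  by_cases hj : j = .r <;> by_cases hk : k = .r
  · subst hj hk
    exact hasApex_r_r hxy
  · subst hj
    exact (hasApex_blue_r hα hk (hspread hk) hxy.symm).symm
  · subst hk
    exact hasApex_blue_r hα hj (hspread hj) hxy
  · have hr : heptadColoring G x y = .r := by simpa [M2_iff, hj, hk] using h
    exact hasApex_of_three_le_card_inter hα hG hG' hxy (intersectionColor_eq_r_iff.1 hr) hj hk

end Completion

section Goodness

variable {α : Type*} [DecidableEq α] [Fintype α] {G : SimpleGraph α}

theorem M2_heptadColoring (hα : Fintype.card α ≤ 14) (x y z : Heptad α) :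
    M2 (heptadColoring G x y, heptadColoring G y z, heptadColoring G x z) := by
  simp only [M2_iff, heptadColoring, intersectionColor_eq_r_iff]
  have hxy := card_union_add_card_inter x.1 y.1
  have hxyz := card_union_add_card_inter (x.1 ∪ y.1) z.1
  rw [union_inter_distrib_right] at hxyz
  have := card_union_le (x.1 ∩ z.1) (y.1 ∩ z.1)
  have := card_le_univ (x.1 ∪ y.1 ∪ z.1)
  have := x.2
  have := y.2
  have := z.2
  lia

theorem card_heptad {α : Type*} [Fintype α] (hα : Fintype.card α = 14) :
    Fintype.card (Heptad α) = Nat.choose 14 7 := by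
  rw [Fintype.card_finset_len, hα]

theorem good_heptadColoring (hα : Fintype.card α = 14) (hG : IsSpread G) (hG' : IsSpread Gᶜ) :
    Good (heptadColoring G) := by
  have : Nontrivial (Heptad α) :=
    Fintype.one_lt_card_iff_nontrivial.1 (by rw [card_heptad hα]; decide)
  exact good_of_hasApex heptadColoring_comm
    (fun _ _ hxy _ _ h ↦ hasApex_heptadColoring hα hG hG' hxy h) (M2_heptadColoring hα.le)

end Goodness

/-- The Paley graph of order `17` restricted to fourteen of its vertices. By Euler's criterion the
nonzero squares modulo `17` are the solutions of `a ^ 8 = 1`. -/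
def paleyGraph : SimpleGraph (Fin 14) where
  Adj a b := ((a.val : ZMod 17) - b.val) ^ 8 = 1
  symm := ⟨fun _ _ h ↦ by rw [← neg_sub, Even.neg_pow (by decide)]; exact h⟩
  loopless := ⟨fun _ h ↦ absurd h (by rw [sub_self]; decide)⟩

instance : DecidableRel paleyGraph.Adj := fun _ _ ↦ inferInstanceAs (Decidable (_ ^ 8 = _))

theorem isSpread_paleyGraph : IsSpread paleyGraph :=
  .of_forall_lt (by decide +kernel) (by decide +kernel)

theorem isSpread_compl_paleyGraph : IsSpread paleyGraphᶜ :=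
  .of_forall_lt (by decide +kernel) (by decide +kernel)

theorem exists_good_fin_choose :
    ∃ c : Fin (Nat.choose 14 7) → Fin (Nat.choose 14 7) → Color, Good c :=
  ⟨_, (good_heptadColoring (Fintype.card_fin 14) isSpread_paleyGraph
    isSpread_compl_paleyGraph).comp_equiv
      (Fintype.equivFinOfCardEq (card_heptad (Fintype.card_fin 14))).symm⟩

/-- There is an edge-coloring of `K_N` for `N = 3432 = C(14,7)` that is good with respect to
`M₂`; consequently `f(2) = min {N : M₂ is realizable on K_N} ≤ 3432`. -/
theorem realization_of_M2_on_3432 :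
    (3432 = Nat.choose 14 7) ∧
    (∃ c : Fin 3432 → Fin 3432 → Color, Good c) ∧
    sInf {N : ℕ | ∃ c : Fin N → Fin N → Color, Good c} ≤ 3432 := by
  have hN : 3432 = Nat.choose 14 7 := by decide +kernel
  have hgood : ∃ c : Fin 3432 → Fin 3432 → Color, Good c := hN ▸ exists_good_fin_choose
  exact ⟨hN, hgood, Nat.sInf_le hgood⟩
end

section
/- Let V be a set, L a finite set of colors, M ⊆ L³, and c a symmetric edge-coloring of the complete graph on V satisfying conditions (i) and (ii) with respect to M. For α ∈ L set R_α = {(x,y) ∈ V × V : x ≠ y and c(xy) = α}, and for binary relations let R ∘ S = {(x,z) : ∃ y, (x,y) ∈ R and (y,z) ∈ S}. Then for all α, β, γ ∈ L: if (R_α ∘ R_β) ∩ R_γ is nonempty, then R_γ ⊆ R_α ∘ R_β. -/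
/-- The binary relation `R_α = {(x,y) : x ≠ y and c(xy) = α}` determined by a color `α`. -/
def colorRel {V L : Type*} (c : V → V → L) (α : L) : Set (V × V) :=
  {p | p.1 ≠ p.2 ∧ c p.1 p.2 = α}

/-- Composition of binary relations: `R ∘ S = {(x,z) : ∃ y, (x,y) ∈ R ∧ (y,z) ∈ S}`. -/
def relComp {V : Type*} (R S : Set (V × V)) : Set (V × V) :=
  {p | ∃ y, (p.1, y) ∈ R ∧ (y, p.2) ∈ S}

section

variable {V L : Type*} {M : Set (L × L × L)} {c : V → V → L} {α β γ : L}

theorem mem_relComp_colorRel {x y : V} :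
    (x, y) ∈ relComp (colorRel c α) (colorRel c β) ↔
      ∃ z, (x ≠ z ∧ c x z = α) ∧ (z ≠ y ∧ c z y = β) :=
  Iff.rfl

/-- Condition (ii) puts the triangle `x y z` into `M`, and condition (i) copies it onto `u v`. -/
theorem exists_triangle_of_color_eq
    (hi : ∀ x y : V, x ≠ y → ∀ j k : L, (c x y, j, k) ∈ M →
      ∃ z : V, z ≠ x ∧ z ≠ y ∧ c y z = j ∧ c x z = k)
    (hii : ∀ x y z : V, x ≠ y → y ≠ z → x ≠ z → (c x y, c y z, c x z) ∈ M)
    {x y z u v : V} (hxy : x ≠ y) (hyz : y ≠ z) (hxz : x ≠ z) (huv : u ≠ v)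
    (hcolor : c x y = c u v) :
    ∃ w, w ≠ u ∧ w ≠ v ∧ c v w = c y z ∧ c u w = c x z :=
  hi u v huv _ _ (hcolor ▸ hii x y z hxy hyz hxz)

/-- Here the converse of a color class may be a different color class, as for the atoms of a
relation algebra that is not symmetric. -/
theorem atoms_of_good_coloring_general
    (hconv : ∀ x y u v : V, x ≠ y → u ≠ v → c x y = c u v → c y x = c v u)
    (hi : ∀ x y : V, x ≠ y → ∀ j k : L, (c x y, j, k) ∈ M →
      ∃ z : V, z ≠ x ∧ z ≠ y ∧ c y z = j ∧ c x z = k)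
    (hii : ∀ x y z : V, x ≠ y → y ≠ z → x ≠ z → (c x y, c y z, c x z) ∈ M)
    (hne : (relComp (colorRel c α) (colorRel c β) ∩ colorRel c γ).Nonempty) :
    colorRel c γ ⊆ relComp (colorRel c α) (colorRel c β) := by
  obtain ⟨⟨x, y⟩, hcomp, hxy, hxyγ⟩ := hne
  obtain ⟨z, ⟨hxz, hxzα⟩, hzy, hzyβ⟩ := mem_relComp_colorRel.mp hcomp
  rintro ⟨u, v⟩ ⟨huv, huvγ⟩
  obtain ⟨w, hwu, hwv, hvw, huw⟩ :=
    exists_triangle_of_color_eq hi hii hxy hzy.symm hxz huv (hxyγ.trans huvγ.symm)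
  have hwvβ : c w v = β := (hconv v w y z hwv.symm hzy.symm hvw).trans hzyβ
  exact mem_relComp_colorRel.mpr ⟨w, ⟨hwu.symm, huw.trans hxzα⟩, hwv, hwvβ⟩

end

/-- If a symmetric edge-coloring `c : V × V → L` satisfies conditions (i) and (ii) with
respect to `M ⊆ L³`, then for all colors `α, β, γ`:
`(R_α ∘ R_β) ∩ R_γ ≠ ∅  →  R_γ ⊆ R_α ∘ R_β`. -/
theorem atoms_of_good_coloring {V L : Type*} [Fintype L] (M : Set (L × L × L))
    (c : V → V → L)
    (hsym : ∀ x y : V, x ≠ y → c x y = c y x)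
    -- condition (i): c(xyz) = (c(xy), c(yz), c(xz)) = (c(xy), j, k) for some z
    (hi : ∀ x y : V, x ≠ y → ∀ j k : L, (c x y, j, k) ∈ M →
      ∃ z : V, z ≠ x ∧ z ≠ y ∧ c y z = j ∧ c x z = k)
    -- condition (ii)
    (hii : ∀ x y z : V, x ≠ y → y ≠ z → x ≠ z → (c x y, c y z, c x z) ∈ M) :
    ∀ α β γ : L,
      (relComp (colorRel c α) (colorRel c β) ∩ colorRel c γ).Nonempty →
      colorRel c γ ⊆ relComp (colorRel c α) (colorRel c β) := by
  have hconv (x y u v : V) (hxy : x ≠ y) (huv : u ≠ v) (h : c x y = c u v) : c y x = c v u :=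
    (hsym x y hxy).symm.trans (h.trans (hsym u v huv))
  exact fun _ _ _ => atoms_of_good_coloring_general hconv hi hii
end

section
/- For every splitting coloring s (no further hypotheses on s are needed), the induced coloring c on 7-element subsets of P contains no all-blue triangle: there do not exist pairwise distinct 7-element subsets X, Y, Z of P such that c(XY), c(YZ), c(XZ) all lie in {b₀, b₁}. Equivalently, c satisfies condition (ii) with respect to M₂: for all pairwise distinct X, Y, Z, the triple (c(XY), c(YZ), c(XZ)) belongs to M₂ = {r,b₀,b₁}³ \ {b₀,b₁}³. -/
/-!
Three `7`-subsets of a `14`-point set have `21` elements between them, so at least `7` repetitions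
have to be absorbed by the three pairwise intersections, and one of these has at least `3` elements.
The corresponding pair is red.
-/

theorem M2_iff_eq_r_or_eq_r_or_eq_r {a b d : Color} :
    M2 (a, b, d) ↔ a = Color.r ∨ b = Color.r ∨ d = Color.r := by
  cases a <;> cases b <;> cases d <;> simp [M2]

section

variable {α : Type*} [DecidableEq α]

theorem card_add_card_add_card_le_card_union_add_card_inter (X Y Z : Finset α) :
    X.card + Y.card + Z.card ≤
      (X ∪ Y ∪ Z).card + (X ∩ Y).card + (Y ∩ Z).card + (X ∩ Z).card := by
  have hXY : (X ∪ Y).card + (X ∩ Y).card = X.card + Y.card :=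
    Finset.card_union_add_card_inter X Y
  have hXYZ : (X ∪ Y ∪ Z).card + ((X ∪ Y) ∩ Z).card = (X ∪ Y).card + Z.card :=
    Finset.card_union_add_card_inter (X ∪ Y) Z
  have hinter : ((X ∪ Y) ∩ Z).card ≤ (X ∩ Z).card + (Y ∩ Z).card := by
    rw [Finset.union_inter_distrib_right]
    exact Finset.card_union_le _ _
  omega

theorem exists_lt_card_inter_of_card_add_lt [Fintype α] {m : ℕ} {X Y Z : Finset α}
    (h : Fintype.card α + 3 * m < X.card + Y.card + Z.card) :
    m < (X ∩ Y).card ∨ m < (Y ∩ Z).card ∨ m < (X ∩ Z).card := by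
  have hle := card_add_card_add_card_le_card_union_add_card_inter X Y Z
  have hunion : (X ∪ Y ∪ Z).card ≤ Fintype.card α := Finset.card_le_univ _
  omega

theorem induced_coloring_no_blue_triangle_general [Fintype α] {k m : ℕ}
    (hkm : Fintype.card α + 3 * m < 3 * k) (c : Finset α → Finset α → Color)
    (hred : ∀ X Y : Finset α, X.card = k → Y.card = k → X ≠ Y →
      m < (X ∩ Y).card → c X Y = Color.r)
    {X Y Z : Finset α} (hX : X.card = k) (hY : Y.card = k) (hZ : Z.card = k)
    (hXY : X ≠ Y) (hYZ : Y ≠ Z) (hXZ : X ≠ Z) : M2 (c X Y, c Y Z, c X Z) :=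
  M2_iff_eq_r_or_eq_r_or_eq_r.mpr <|
    (exists_lt_card_inter_of_card_add_lt (by omega)).imp
      (hred X Y hX hY hXY) (Or.imp (hred Y Z hY hZ hYZ) (hred X Z hX hZ hXZ))

end

/-- For every splitting coloring `s` of the 14-point set, the induced coloring `c` on
7-element subsets has no all-blue triangle, i.e. it satisfies condition (ii) with respect
to `M₂`. -/
theorem induced_coloring_no_blue_triangle
    -- `s` is a splitting coloring: symmetric with values in {b₀, b₁}
    (s : Fin 14 → Fin 14 → Color)
    (hssym : ∀ i j : Fin 14, i ≠ j → s i j = s j i)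
    (hsblue : ∀ i j : Fin 14, i ≠ j → s i j = Color.b0 ∨ s i j = Color.b1)
    -- `c` is the coloring on 7-element subsets induced by `s`
    (c : Finset (Fin 14) → Finset (Fin 14) → Color)
    (hc0 : ∀ X Y : Finset (Fin 14), X.card = 7 → Y.card = 7 →
      (X ∩ Y).card = 0 → c X Y = Color.b0)
    (hc1 : ∀ X Y : Finset (Fin 14), X.card = 7 → Y.card = 7 →
      (X ∩ Y).card = 1 → c X Y = Color.b1)
    (hc2 : ∀ X Y : Finset (Fin 14), X.card = 7 → Y.card = 7 → ∀ i j : Fin 14, i ≠ j →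
      X ∩ Y = {i, j} → c X Y = s i j)
    (hcr : ∀ X Y : Finset (Fin 14), X.card = 7 → Y.card = 7 → X ≠ Y →
      3 ≤ (X ∩ Y).card → c X Y = Color.r) :
    ∀ X Y Z : Finset (Fin 14), X.card = 7 → Y.card = 7 → Z.card = 7 →
      X ≠ Y → Y ≠ Z → X ≠ Z → M2 (c X Y, c Y Z, c X Z) := by
  intro X Y Z
  exact induced_coloring_no_blue_triangle_general (k := 7) (m := 2) (by simp) c hcr
end

section
/- The cyclic 2-coloring of K₁₇ determined by C₀ and C₁ has no monochromatic K₄: there do not exist four pairwise distinct elements of ZMod 17 all of whose pairwise differences lie in C₀, and there do not exist four pairwise distinct elements of ZMod 17 all of whose pairwise differences lie in C₁. -/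
/-- The `b₀` color class of the cyclic coloring of `K₁₇`: the difference set
`{1,2,4,8,9,13,15,16} ⊆ ZMod 17`. -/
def C0 : Finset (ZMod 17) := {1, 2, 4, 8, 9, 13, 15, 16}

/-- The `b₁` color class of the cyclic coloring of `K₁₇`: the difference set
`{3,5,6,7,10,11,12,14} ⊆ ZMod 17`. -/
def C1 : Finset (ZMod 17) := {3, 5, 6, 7, 10, 11, 12, 14}

/-! `C0` and `C1` are the nonzero squares and the nonsquares modulo 17. Given distinct `w` and `x`
in a monochromatic clique, the map `z ↦ (z - w) / (x - w)` carries the clique to one that contains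
`0` and `1` and has all its differences square, since a quotient of two squares or of two nonsquares
is a square. Each remaining vertex `a` is then a nonzero square preceded by a nonzero square, so
`a ∈ {2, 9, 16}`; the differences of these three numbers are `±7` and `±14`, which are nonsquares,
so there is at most one such vertex. -/

section Normalization

variable {K M F : Type*} [DivisionRing K] [MonoidWithZero M] [IsRightCancelMulZero M]
  [FunLike F K M] [MonoidHomClass F K M]

theorem map_div_eq_one_of_map_eq {χ : F} {a b : K} (hb : b ≠ 0) (hχb : χ b ≠ 0)
    (hab : χ a = χ b) : χ (a / b) = 1 := by
  apply mul_right_cancel₀ hχb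
  rw [← map_mul, div_mul_cancel₀ a hb, one_mul, hab]

theorem exists_zero_mem_one_mem_pairwise_map_sub_eq_one {χ : F} {ε : M} (hε : ε ≠ 0)
    {A : Finset K} (hA : 1 < A.card) (hχ : (A : Set K).Pairwise fun x y ↦ χ (x - y) = ε) :
    ∃ B : Finset K, B.card = A.card ∧ 0 ∈ B ∧ 1 ∈ B ∧
      (B : Set K).Pairwise fun x y ↦ χ (x - y) = 1 := by
  classical
  obtain ⟨x, hx, w, hw, hxw⟩ := Finset.one_lt_card.mp hA
  have hxw₀ : x - w ≠ 0 := sub_ne_zero.mpr hxw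
  have hχxw : χ (x - w) = ε := hχ hx hw hxw
  let φ : K → K := fun z ↦ (z - w) / (x - w)
  have hφ : Function.Injective φ := fun _ _ h ↦
    sub_left_injective ((div_left_inj' hxw₀).mp h)
  have hφ_sub (y z : K) : φ y - φ z = (y - z) / (x - w) := by
    rw [← sub_div, sub_sub_sub_cancel_right]
  refine ⟨A.image φ, Finset.card_image_of_injective A hφ,
    Finset.mem_image.mpr ⟨w, hw, by simp [φ]⟩,
    Finset.mem_image.mpr ⟨x, hx, div_self hxw₀⟩, ?_⟩
  rw [Finset.coe_image, hφ.injOn.pairwise_image]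
  intro y hy z hz hyz
  change χ (φ y - φ z) = 1
  rw [hφ_sub]
  exact map_div_eq_one_of_map_eq hxw₀ (hχxw ▸ hε) ((hχ hy hz hyz).trans hχxw.symm)

end Normalization

section ModSeventeen

local instance fact_prime_seventeen : Fact (Nat.Prime 17) := ⟨by norm_num⟩

theorem mem_C0_iff_quadraticChar_eq_one :
    ∀ a : ZMod 17, a ∈ C0 ↔ quadraticChar (ZMod 17) a = 1 := by decide

theorem mem_C1_iff_quadraticChar_eq_neg_one :
    ∀ a : ZMod 17, a ∈ C1 ↔ quadraticChar (ZMod 17) a = -1 := by decide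

theorem mem_two_nine_sixteen_of_mem_C0_of_sub_one_mem_C0 :
    ∀ a ∈ C0, a - 1 ∈ C0 → a ∈ ({2, 9, 16} : Finset (ZMod 17)) := by decide

theorem sub_notMem_C0_of_mem_two_nine_sixteen :
    ∀ a ∈ ({2, 9, 16} : Finset (ZMod 17)), ∀ b ∈ ({2, 9, 16} : Finset (ZMod 17)),
      a - b ∉ C0 := by decide

theorem card_le_three_of_pairwise_sub_mem_C0 {B : Finset (ZMod 17)} (h0 : 0 ∈ B) (h1 : 1 ∈ B)
    (hB : (B : Set (ZMod 17)).Pairwise fun x y ↦ x - y ∈ C0) : B.card ≤ 3 := by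
  have hmem : ∀ a ∈ B \ {0, 1}, a ∈ B ∧ a ∈ ({2, 9, 16} : Finset (ZMod 17)) := by
    intro a ha
    obtain ⟨haB, ha0, ha1⟩ : a ∈ B ∧ a ≠ 0 ∧ a ≠ 1 := by simpa using ha
    have ha_mem : a ∈ C0 := sub_zero a ▸ hB haB h0 ha0
    exact ⟨haB, mem_two_nine_sixteen_of_mem_C0_of_sub_one_mem_C0 a ha_mem (hB haB h1 ha1)⟩
  have hrest : (B \ {0, 1}).card ≤ 1 := by
    refine Finset.card_le_one.mpr fun a ha b hb ↦ by_contra fun hab ↦ ?_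
    obtain ⟨haB, ha⟩ := hmem a ha
    obtain ⟨hbB, hb⟩ := hmem b hb
    exact sub_notMem_C0_of_mem_two_nine_sixteen a ha b hb (hB haB hbB hab)
  calc B.card ≤ (B \ {0, 1}).card + ({0, 1} : Finset (ZMod 17)).card :=
        Finset.card_le_card_sdiff_add_card
    _ ≤ 1 + 2 := add_le_add hrest Finset.card_le_two

theorem card_le_three_of_pairwise_quadraticChar_sub_eq {ε : ℤ} (hε : ε ≠ 0)
    {A : Finset (ZMod 17)}
    (hA : (A : Set (ZMod 17)).Pairwise fun x y ↦ quadraticChar (ZMod 17) (x - y) = ε) :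
    A.card ≤ 3 := by
  by_contra! hcard
  obtain ⟨B, hBA, h0, h1, hB⟩ :=
    exists_zero_mem_one_mem_pairwise_map_sub_eq_one hε (by omega) hA
  have hB_le : B.card ≤ 3 := card_le_three_of_pairwise_sub_mem_C0 h0 h1 <|
    hB.mono' fun x y hxy ↦ (mem_C0_iff_quadraticChar_eq_one (x - y)).mpr hxy
  omega

end ModSeventeen

/-- The cyclic 2-coloring of `K₁₇` determined by `C₀` and `C₁` has no monochromatic `K₄`:
there is no set of four pairwise distinct elements of `ZMod 17` all of whose pairwise
differences lie in `C₀`, and likewise for `C₁`. -/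
theorem cyclic_coloring_no_mono_K4 :
    (¬ ∃ A : Finset (ZMod 17), A.card = 4 ∧ ∀ x ∈ A, ∀ y ∈ A, x ≠ y → x - y ∈ C0) ∧
    (¬ ∃ A : Finset (ZMod 17), A.card = 4 ∧ ∀ x ∈ A, ∀ y ∈ A, x ≠ y → x - y ∈ C1) := by
  constructor
  · rintro ⟨A, hcard, hA⟩
    have hA_le : A.card ≤ 3 := card_le_three_of_pairwise_quadraticChar_sub_eq one_ne_zero
      fun x hx y hy hxy ↦ (mem_C0_iff_quadraticChar_eq_one _).mp (hA x hx y hy hxy)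
    omega
  · rintro ⟨A, hcard, hA⟩
    have hA_le : A.card ≤ 3 := card_le_three_of_pairwise_quadraticChar_sub_eq
      (neg_ne_zero.mpr one_ne_zero)
      fun x hx y hy hxy ↦ (mem_C1_iff_quadraticChar_eq_neg_one _).mp (hA x hx y hy hxy)
    omega
end

section
/- (0-edge case) Let s be a splitting coloring of P = {1,…,14} with no monochromatic K₄, no monochromatic K_{4,3}, and no monochromatic K_{5,2}, and let c be the induced coloring on 7-element subsets of P. Then for all 7-element subsets X, Y of P with X ∩ Y = ∅ (so c(XY) = b₀) and every triple (b₀, j, k) ∈ M₂, there exists a 7-element subset Z of P, distinct from X and Y, with c(XZ) = j and c(YZ) = k. -/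
/-!
For disjoint `X` and `Y`, any `A ⊆ X` and `B ⊆ Y` with `|A| + |B| = 7` give a 7-element set
`Z = A ∪ B` with `X ∩ Z = A` and `Y ∩ Z = B`. A triple `(b₀, j, k) ∈ M₂` has `j` or `k` red, and
three points of `Z` suffice to make a side red. The other side gets three points if it is to be red
too, and otherwise a pair of the required blue, which exists because no 7-element set is
monochromatic.
-/

section

variable {α κ : Type*}

/-- `s` has a monochromatic `K_n`: an `n`-element set all of whose pairs get one color.
No symmetry of `s` is built in, so both orders of each pair are required to have this color. -/
def HasMonochromaticClique (s : α → α → κ) (n : ℕ) : Prop :=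
  ∃ (b : κ) (W : Finset α), W.card = n ∧ ∀ i ∈ W, ∀ j ∈ W, i ≠ j → s i j = b

theorem HasMonochromaticClique.anti {s : α → α → κ} {m n : ℕ} (hmn : m ≤ n)
    (h : HasMonochromaticClique s n) : HasMonochromaticClique s m := by
  obtain ⟨b, W, hW, hmono⟩ := h
  obtain ⟨V, hVW, hV⟩ := Finset.exists_subset_card_eq (hmn.trans_eq hW.symm)
  exact ⟨b, V, hV, fun i hi j hj => hmono i (hVW hi) j (hVW hj)⟩

theorem exists_pair_color_eq {s : α → α → κ} {a b : κ} {X : Finset α}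
    (hs : ∀ i j, i ≠ j → s i j = a ∨ s i j = b)
    (hX : ¬ HasMonochromaticClique s X.card) :
    ∃ i ∈ X, ∃ j ∈ X, i ≠ j ∧ s i j = a := by
  by_contra! hne
  exact hX ⟨b, X, rfl, fun i hi j hj hij => (hs i j hij).resolve_left (hne i hi j hj hij)⟩

end

section

variable {α : Type*} [DecidableEq α] {m : ℕ} {X Y A B : Finset α}

theorem inter_union_eq_left_of_disjoint (hXY : Disjoint X Y) (hA : A ⊆ X) (hB : B ⊆ Y) :
    X ∩ (A ∪ B) = A := by
  rw [Finset.inter_union_distrib_left, Finset.inter_eq_right.2 hA,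
    Finset.disjoint_iff_inter_eq_empty.1 (hXY.mono_right hB), Finset.union_empty]

theorem union_ne_left_of_disjoint (hXY : Disjoint X Y) (hB : B ⊆ Y) (hB₀ : B.Nonempty) :
    A ∪ B ≠ X := fun h =>
  hB₀.ne_empty <| Finset.disjoint_self_iff_empty B |>.1 <|
    hXY.mono (Finset.subset_union_right.trans h.subset) hB

/-- `c` is the coloring that the coloring `s` of pairs of points induces on pairs of `m`-element
sets. Since `c` takes ordered pairs, `pair` determines `c X Y` through both orders of the two
common points. -/
structure IsInducedColoring (m : ℕ) (s : α → α → Color) (c : Finset α → Finset α → Color) :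
    Prop where
  disjoint : ∀ X Y : Finset α, X.card = m → Y.card = m → (X ∩ Y).card = 0 → c X Y = Color.b0
  singleton : ∀ X Y : Finset α, X.card = m → Y.card = m → (X ∩ Y).card = 1 → c X Y = Color.b1
  pair : ∀ X Y : Finset α, X.card = m → Y.card = m → ∀ i j : α, i ≠ j → X ∩ Y = {i, j} →
    c X Y = s i j
  red : ∀ X Y : Finset α, X.card = m → Y.card = m → X ≠ Y → 3 ≤ (X ∩ Y).card → c X Y = Color.r

namespace IsInducedColoring

variable {s : α → α → Color} {c : Finset α → Finset α → Color}

theorem exists_inter_forcing_color (hc : IsInducedColoring m s c)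
    (hs : ∀ i j, i ≠ j → s i j = Color.b0 ∨ s i j = Color.b1)
    (hK : ¬ HasMonochromaticClique s m) (hm : 3 ≤ m) (hX : X.card = m) (j : Color) :
    ∃ A ⊆ X, A.Nonempty ∧ A.card ≤ 3 ∧
      ∀ Z : Finset α, Z.card = m → X ≠ Z → X ∩ Z = A → c X Z = j := by
  subst hX
  have red_or_pair : j = Color.r ∨ ∃ x ∈ X, ∃ y ∈ X, x ≠ y ∧ s x y = j := by
    cases j with
    | r => exact Or.inl rfl
    | b0 => exact Or.inr (exists_pair_color_eq hs hK)
    | b1 => exact Or.inr (exists_pair_color_eq (fun x y hxy => (hs x y hxy).symm) hK)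
  obtain rfl | ⟨x, hx, y, hy, hxy, rfl⟩ := red_or_pair
  · obtain ⟨A, hAX, hA⟩ := Finset.exists_subset_card_eq hm
    exact ⟨A, hAX, Finset.card_pos.1 (by lia), hA.le,
      fun Z hZ hne hXZ => hc.red X Z rfl hZ hne (by rw [hXZ, hA])⟩
  · exact ⟨{x, y}, Finset.insert_subset hx (Finset.singleton_subset_iff.2 hy),
      Finset.insert_nonempty x {y}, Finset.card_le_two.trans (by norm_num),
      fun Z hZ _ hXZ => hc.pair X Z rfl hZ x y hxy hXZ⟩

theorem exists_inter_eq_and_red (hc : IsInducedColoring m s c) (hXY : Disjoint X Y)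
    (hY : Y.card = m) (hAX : A ⊆ X) (hA₀ : A.Nonempty) (hA : A.card + 3 ≤ m) :
    ∃ Z : Finset α, Z.card = m ∧ Z ≠ X ∧ Z ≠ Y ∧ X ∩ Z = A ∧ c Y Z = Color.r := by
  obtain ⟨B, hBY, hB⟩ := Finset.exists_subset_card_eq (s := Y) (n := m - A.card) (by lia)
  have hZ : (A ∪ B).card = m := by
    rw [Finset.card_union_of_disjoint (hXY.mono hAX hBY)]
    lia
  have hZX : A ∪ B ≠ X := union_ne_left_of_disjoint hXY hBY (Finset.card_pos.1 (by lia))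
  have hZY : A ∪ B ≠ Y := by
    rw [Finset.union_comm]
    exact union_ne_left_of_disjoint hXY.symm hAX hA₀
  have hYZ : Y ∩ (A ∪ B) = B := by
    rw [Finset.union_comm]
    exact inter_union_eq_left_of_disjoint hXY.symm hBY hAX
  exact ⟨A ∪ B, hZ, hZX, hZY, inter_union_eq_left_of_disjoint hXY hAX hBY,
    hc.red Y (A ∪ B) hY hZ hZY.symm (by rw [hYZ]; lia)⟩

theorem exists_color_eq_and_red (hc : IsInducedColoring m s c)
    (hs : ∀ i j, i ≠ j → s i j = Color.b0 ∨ s i j = Color.b1)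
    (hK : ¬ HasMonochromaticClique s m) (hm : 6 ≤ m) (hX : X.card = m) (hY : Y.card = m)
    (hXY : Disjoint X Y) (j : Color) :
    ∃ Z : Finset α, Z.card = m ∧ Z ≠ X ∧ Z ≠ Y ∧ c X Z = j ∧ c Y Z = Color.r := by
  obtain ⟨A, hAX, hA₀, hA, hcolor⟩ := hc.exists_inter_forcing_color hs hK (by lia) hX j
  obtain ⟨Z, hZ, hZX, hZY, hXZ, hred⟩ := hc.exists_inter_eq_and_red hXY hY hAX hA₀ (by lia)
  exact ⟨Z, hZ, hZX, hZY, hcolor Z hZ hZX.symm hXZ, hred⟩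

end IsInducedColoring

theorem M2_iff_exists_red (i j k : Color) :
    M2 (i, j, k) ↔ i = Color.r ∨ j = Color.r ∨ k = Color.r := by
  cases i <;> cases j <;> cases k <;> simp [M2]

theorem zero_edge_needs_met_general {s : α → α → Color} {c : Finset α → Finset α → Color}
    (hc : IsInducedColoring m s c) (hs : ∀ i j, i ≠ j → s i j = Color.b0 ∨ s i j = Color.b1)
    (hK : ¬ HasMonochromaticClique s m) (hm : 6 ≤ m) (hX : X.card = m) (hY : Y.card = m)
    (hXY : Disjoint X Y) {j k : Color} (hjk : M2 (Color.b0, j, k)) :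
    ∃ Z : Finset α, Z.card = m ∧ Z ≠ X ∧ Z ≠ Y ∧ c X Z = j ∧ c Y Z = k := by
  obtain h | rfl | rfl := (M2_iff_exists_red _ _ _).1 hjk
  · cases h
  · obtain ⟨Z, hZ, hZY, hZX, hk, hr⟩ := hc.exists_color_eq_and_red hs hK hm hY hX hXY.symm k
    exact ⟨Z, hZ, hZX, hZY, hr, hk⟩
  · exact hc.exists_color_eq_and_red hs hK hm hX hY hXY j

end

/-- (0-edge case) For 7-element subsets `X`, `Y` with `|X ∩ Y| = 0` (so `c(XY) = b₀`),
every need `(b₀, j, k) ∈ M₂` of the edge `XY` has a witness: a 7-element subset `Z`,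
distinct from `X` and `Y`, with `c(XZ) = j` and `c(YZ) = k`. -/
theorem zero_edge_needs_met
    -- `s` is a splitting coloring: symmetric with values in {b₀, b₁}
    (s : Fin 14 → Fin 14 → Color)
    (hssym : ∀ i j : Fin 14, i ≠ j → s i j = s j i)
    (hsblue : ∀ i j : Fin 14, i ≠ j → s i j = Color.b0 ∨ s i j = Color.b1)
    -- `s` has no monochromatic K₄
    (hK4 : ¬ ∃ (b : Color) (W : Finset (Fin 14)), W.card = 4 ∧
      ∀ i ∈ W, ∀ j ∈ W, i ≠ j → s i j = b)
    -- `s` has no monochromatic K_{4,3}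
    (hK43 : ¬ ∃ (b : Color) (A B : Finset (Fin 14)), Disjoint A B ∧ A.card = 4 ∧ B.card = 3 ∧
      ∀ i ∈ A, ∀ j ∈ B, s i j = b)
    -- `s` has no monochromatic K_{5,2}
    (hK52 : ¬ ∃ (b : Color) (A B : Finset (Fin 14)), Disjoint A B ∧ A.card = 5 ∧ B.card = 2 ∧
      ∀ i ∈ A, ∀ j ∈ B, s i j = b)
    -- `c` is the coloring on 7-element subsets induced by `s`
    (c : Finset (Fin 14) → Finset (Fin 14) → Color)
    (hc0 : ∀ X Y : Finset (Fin 14), X.card = 7 → Y.card = 7 →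
      (X ∩ Y).card = 0 → c X Y = Color.b0)
    (hc1 : ∀ X Y : Finset (Fin 14), X.card = 7 → Y.card = 7 →
      (X ∩ Y).card = 1 → c X Y = Color.b1)
    (hc2 : ∀ X Y : Finset (Fin 14), X.card = 7 → Y.card = 7 → ∀ i j : Fin 14, i ≠ j →
      X ∩ Y = {i, j} → c X Y = s i j)
    (hcr : ∀ X Y : Finset (Fin 14), X.card = 7 → Y.card = 7 → X ≠ Y →
      3 ≤ (X ∩ Y).card → c X Y = Color.r)
    :
    ∀ X Y : Finset (Fin 14), X.card = 7 → Y.card = 7 → (X ∩ Y).card = 0 →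
      ∀ j k : Color, M2 (Color.b0, j, k) →
      ∃ Z : Finset (Fin 14), Z.card = 7 ∧ Z ≠ X ∧ Z ≠ Y ∧ c X Z = j ∧ c Y Z = k := by
  intro X Y hX hY hXY j k hjk
  exact zero_edge_needs_met_general ⟨hc0, hc1, hc2, hcr⟩ hsblue
    (mt (HasMonochromaticClique.anti (by norm_num)) hK4) (by norm_num) hX hY
    (Finset.disjoint_iff_inter_eq_empty.2 (Finset.card_eq_zero.1 hXY)) hjk
end

section
/- (1-edge case) Let s be a splitting coloring of P = {1,…,14} with no monochromatic K₄, no monochromatic K_{4,3}, and no monochromatic K_{5,2}, and let c be the induced coloring on 7-element subsets of P. Then for all 7-element subsets X, Y of P with |X ∩ Y| = 1 (so c(XY) = b₁) and every triple (b₁, j, k) ∈ M₂, there exists a 7-element subset Z of P, distinct from X and Y, with c(XZ) = j and c(YZ) = k. -/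
section

open Finset

variable {V : Type*} [DecidableEq V]

theorem ne_of_card_inter_lt_card {X Z : Finset V} (h : #(X ∩ Z) < #X) : Z ≠ X := by
  rintro rfl
  simp at h

variable [Fintype V]

theorem exists_card_inter_eq_of_le_card_regions {X Y : Finset V} {p a b d : ℕ}
    (hp : p ≤ #(X ∩ Y)) (ha : a ≤ #(X \ Y)) (hb : b ≤ #(Y \ X)) (hd : d ≤ #(X ∪ Y)ᶜ) :
    ∃ Z : Finset V, #Z = p + a + b + d ∧ #(X ∩ Z) = p + a ∧ #(Y ∩ Z) = p + b := by
  obtain ⟨P, hP, rfl⟩ := exists_subset_card_eq hp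
  obtain ⟨A, hA, rfl⟩ := exists_subset_card_eq ha
  obtain ⟨B, hB, rfl⟩ := exists_subset_card_eq hb
  obtain ⟨D, hD, rfl⟩ := exists_subset_card_eq hd
  simp only [subset_iff, mem_inter, mem_sdiff, mem_compl, mem_union, not_or] at hP hA hB hD
  have hPA : Disjoint P A := disjoint_left.2 (by grind)
  have hPB : Disjoint P B := disjoint_left.2 (by grind)
  have hPAB : Disjoint (P ∪ A) B := disjoint_left.2 (by grind)
  have hPABD : Disjoint (P ∪ A ∪ B) D := disjoint_left.2 (by grind)
  have hX : X ∩ (P ∪ A ∪ B ∪ D) = P ∪ A := by grind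
  have hY : Y ∩ (P ∪ A ∪ B ∪ D) = P ∪ B := by grind
  refine ⟨P ∪ A ∪ B ∪ D, ?_, ?_, ?_⟩
  · rw [card_union_of_disjoint hPABD, card_union_of_disjoint hPAB, card_union_of_disjoint hPA]
  · rw [hX, card_union_of_disjoint hPA]
  · rw [hY, card_union_of_disjoint hPB]

/-- The four inequalities say `|x + y - n| ≤ m` and `|x - y| ≤ n - m` for `m = #(X ∩ Y)`; they are
also necessary. -/
theorem exists_card_eq_card_inter_eq {n x y : ℕ} (hV : Fintype.card V = 2 * n) {X Y : Finset V}
    (hX : #X = n) (hY : #Y = n) (hadd_le : x + y ≤ n + #(X ∩ Y)) (hle_add : n ≤ x + y + #(X ∩ Y))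
    (hxy : x + #(X ∩ Y) ≤ y + n) (hyx : y + #(X ∩ Y) ≤ x + n) :
    ∃ Z : Finset V, #Z = n ∧ #(X ∩ Z) = x ∧ #(Y ∩ Z) = y := by
  have hXdiff : #(X \ Y) + #(X ∩ Y) = #X := card_sdiff_add_card_inter X Y
  have hYdiff : #(Y \ X) + #(X ∩ Y) = #Y := inter_comm X Y ▸ card_sdiff_add_card_inter Y X
  have hunion : #(X ∪ Y) + #(X ∩ Y) = #X + #Y := card_union_add_card_inter X Y
  have hcompl : #(X ∪ Y) + #(X ∪ Y)ᶜ = 2 * n := hV ▸ card_add_card_compl (X ∪ Y)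
  -- `p` is to be `#(X ∩ Y ∩ Z)`; each condition keeps the part of `Z` in one region within bounds.
  obtain ⟨p, hp⟩ : ∃ p, (p ≤ #(X ∩ Y) ∧ p ≤ x ∧ p ≤ y ∧ p + n ≤ x + y + #(X ∩ Y)) ∧
      x + y ≤ p + n ∧ x + #(X ∩ Y) ≤ p + n ∧ y + #(X ∩ Y) ≤ p + n :=
    ⟨max (x + y - n) (max (x + #(X ∩ Y) - n) (y + #(X ∩ Y) - n)), by omega⟩
  obtain ⟨Z, hZ, hXZ, hYZ⟩ := exists_card_inter_eq_of_le_card_regions (X := X) (Y := Y)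
    (p := p) (a := x - p) (b := y - p) (d := p + n - (x + y))
    (by omega) (by omega) (by omega) (by omega)
  exact ⟨Z, by omega, by omega, by omega⟩

theorem exists_ne_card_inter_eq_of_card_inter_eq_one {n x y : ℕ} (hV : Fintype.card V = 2 * n)
    {X Y : Finset V} (hX : #X = n) (hY : #Y = n) (hXY : #(X ∩ Y) = 1) (hx : x < n) (hy : y < n)
    (hadd_le : x + y ≤ n + 1) (hle_add : n ≤ x + y + 1) :
    ∃ Z : Finset V, #Z = n ∧ Z ≠ X ∧ Z ≠ Y ∧ #(X ∩ Z) = x ∧ #(Y ∩ Z) = y := by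
  obtain ⟨Z, hZ, hXZ, hYZ⟩ := exists_card_eq_card_inter_eq (x := x) (y := y) hV hX hY
    (by omega) (by omega) (by omega) (by omega)
  exact ⟨Z, hZ, ne_of_card_inter_lt_card (by omega), ne_of_card_inter_lt_card (by omega), hXZ, hYZ⟩

theorem one_edge_needs_met_general {n : ℕ} (hn : 5 ≤ n) (hV : Fintype.card V = 2 * n)
    (c : Finset V → Finset V → Color)
    (hc0 : ∀ X Y : Finset V, #X = n → #Y = n → #(X ∩ Y) = 0 → c X Y = Color.b0)
    (hc1 : ∀ X Y : Finset V, #X = n → #Y = n → #(X ∩ Y) = 1 → c X Y = Color.b1)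
    (hcr : ∀ X Y : Finset V, #X = n → #Y = n → X ≠ Y → 3 ≤ #(X ∩ Y) → c X Y = Color.r)
    {X Y : Finset V} (hX : #X = n) (hY : #Y = n) (hXY : #(X ∩ Y) = 1)
    {j k : Color} (hjk : M2 (Color.b1, j, k)) :
    ∃ Z : Finset V, #Z = n ∧ Z ≠ X ∧ Z ≠ Y ∧ c X Z = j ∧ c Y Z = k := by
  have exists_witness {x y : ℕ} := exists_ne_card_inter_eq_of_card_inter_eq_one
    (x := x) (y := y) hV hX hY hXY
  have red {W Z : Finset V} (hW : #W = n) (hZ : #Z = n) (hZW : Z ≠ W) (h : 3 ≤ #(W ∩ Z)) :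
      c W Z = Color.r := hcr W Z hW hZ hZW.symm h
  match j, k with
  | Color.r, Color.r =>
    obtain ⟨Z, hZ, hZX, hZY, hXZ, hYZ⟩ := exists_witness (x := 3) (y := n - 2)
      (by omega) (by omega) (by omega) (by omega)
    exact ⟨Z, hZ, hZX, hZY, red hX hZ hZX (by omega), red hY hZ hZY (by omega)⟩
  | Color.r, Color.b0 =>
    obtain ⟨Z, hZ, hZX, hZY, hXZ, hYZ⟩ := exists_witness (x := n - 1) (y := 0)
      (by omega) (by omega) (by omega) (by omega)
    exact ⟨Z, hZ, hZX, hZY, red hX hZ hZX (by omega), hc0 Y Z hY hZ hYZ⟩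
  | Color.r, Color.b1 =>
    obtain ⟨Z, hZ, hZX, hZY, hXZ, hYZ⟩ := exists_witness (x := n - 1) (y := 1)
      (by omega) (by omega) (by omega) (by omega)
    exact ⟨Z, hZ, hZX, hZY, red hX hZ hZX (by omega), hc1 Y Z hY hZ hYZ⟩
  | Color.b0, Color.r =>
    obtain ⟨Z, hZ, hZX, hZY, hXZ, hYZ⟩ := exists_witness (x := 0) (y := n - 1)
      (by omega) (by omega) (by omega) (by omega)
    exact ⟨Z, hZ, hZX, hZY, hc0 X Z hX hZ hXZ, red hY hZ hZY (by omega)⟩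
  | Color.b1, Color.r =>
    obtain ⟨Z, hZ, hZX, hZY, hXZ, hYZ⟩ := exists_witness (x := 1) (y := n - 1)
      (by omega) (by omega) (by omega) (by omega)
    exact ⟨Z, hZ, hZX, hZY, hc1 X Z hX hZ hXZ, red hY hZ hZY (by omega)⟩
  | Color.b0, Color.b0 | Color.b0, Color.b1 | Color.b1, Color.b0 | Color.b1, Color.b1 =>
    exact absurd hjk (by simp [M2])

end

/-- (1-edge case) For 7-element subsets `X`, `Y` with `|X ∩ Y| = 1` (so `c(XY) = b₁`),
every need `(b₁, j, k) ∈ M₂` of the edge `XY` has a witness: a 7-element subset `Z`,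
distinct from `X` and `Y`, with `c(XZ) = j` and `c(YZ) = k`. -/
theorem one_edge_needs_met
    -- `s` is a splitting coloring: symmetric with values in {b₀, b₁}
    (s : Fin 14 → Fin 14 → Color)
    (hssym : ∀ i j : Fin 14, i ≠ j → s i j = s j i)
    (hsblue : ∀ i j : Fin 14, i ≠ j → s i j = Color.b0 ∨ s i j = Color.b1)
    -- `s` has no monochromatic K₄
    (hK4 : ¬ ∃ (b : Color) (W : Finset (Fin 14)), W.card = 4 ∧
      ∀ i ∈ W, ∀ j ∈ W, i ≠ j → s i j = b)
    -- `s` has no monochromatic K_{4,3}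
    (hK43 : ¬ ∃ (b : Color) (A B : Finset (Fin 14)), Disjoint A B ∧ A.card = 4 ∧ B.card = 3 ∧
      ∀ i ∈ A, ∀ j ∈ B, s i j = b)
    -- `s` has no monochromatic K_{5,2}
    (hK52 : ¬ ∃ (b : Color) (A B : Finset (Fin 14)), Disjoint A B ∧ A.card = 5 ∧ B.card = 2 ∧
      ∀ i ∈ A, ∀ j ∈ B, s i j = b)
    -- `c` is the coloring on 7-element subsets induced by `s`
    (c : Finset (Fin 14) → Finset (Fin 14) → Color)
    (hc0 : ∀ X Y : Finset (Fin 14), X.card = 7 → Y.card = 7 →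
      (X ∩ Y).card = 0 → c X Y = Color.b0)
    (hc1 : ∀ X Y : Finset (Fin 14), X.card = 7 → Y.card = 7 →
      (X ∩ Y).card = 1 → c X Y = Color.b1)
    (hc2 : ∀ X Y : Finset (Fin 14), X.card = 7 → Y.card = 7 → ∀ i j : Fin 14, i ≠ j →
      X ∩ Y = {i, j} → c X Y = s i j)
    (hcr : ∀ X Y : Finset (Fin 14), X.card = 7 → Y.card = 7 → X ≠ Y →
      3 ≤ (X ∩ Y).card → c X Y = Color.r)
    :
    ∀ X Y : Finset (Fin 14), X.card = 7 → Y.card = 7 → (X ∩ Y).card = 1 →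
      ∀ j k : Color, M2 (Color.b1, j, k) →
      ∃ Z : Finset (Fin 14), Z.card = 7 ∧ Z ≠ X ∧ Z ≠ Y ∧ c X Z = j ∧ c Y Z = k := by
  intro X Y hX hY hXY j k hjk
  exact one_edge_needs_met_general (by norm_num) (by simp) c hc0 hc1 hcr hX hY hXY hjk
end

section
/- (2-edge case) Let s be a splitting coloring of P = {1,…,14} with no monochromatic K₄, no monochromatic K_{4,3}, and no monochromatic K_{5,2}, and let c be the induced coloring on 7-element subsets of P. Then for all 7-element subsets X, Y of P with |X ∩ Y| = 2 (so c(XY) ∈ {b₀, b₁}) and every triple (c(XY), j, k) ∈ M₂, there exists a 7-element subset Z of P, distinct from X and Y, with c(XZ) = j and c(YZ) = k. -/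
/-!
A witness `Z` for a red-blue need is built so as to meet `Y` in exactly `0` or `1` points: take
those points in `X ∩ Y`, take enough points of `X \ Y` to force `|X ∩ Z| ≥ 3`, and fill up outside
`Y`. For the red-red need, exchanging a point of `X \ Y` for a point of `Y \ X` turns `X` into a set
that still shares most of its points with `X` and shares `|X ∩ Y| + 1 = 3` points with `Y`. Since
`c(XY)` is blue, no other needs occur.
-/

section

open Finset

variable {α : Type*}

/-- The need `(c(XY), j, k)` of the edge `XY` is met: some third `n`-element set `Z` has
`c(XZ) = j` and `c(YZ) = k`. -/
def NeedMet (n : ℕ) (c : Finset α → Finset α → Color) (X Y : Finset α) (j k : Color) : Prop :=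
  ∃ Z : Finset α, #Z = n ∧ Z ≠ X ∧ Z ≠ Y ∧ c X Z = j ∧ c Y Z = k

theorem NeedMet.symm {n : ℕ} {c : Finset α → Finset α → Color} {X Y : Finset α} {j k : Color} :
    NeedMet n c X Y j k → NeedMet n c Y X k j
  | ⟨Z, hZ, hZX, hZY, hj, hk⟩ => ⟨Z, hZ, hZY, hZX, hk, hj⟩

variable [DecidableEq α]

theorem inter_insert_erase_self {X : Finset α} {p q : α} (hq : q ∉ X) :
    X ∩ insert q (X.erase p) = X.erase p := by
  rw [inter_insert_of_notMem hq, inter_eq_right.mpr (erase_subset p X)]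

theorem inter_insert_erase {X Y : Finset α} {p q : α} (hp : p ∉ Y) (hq : q ∈ Y) :
    Y ∩ insert q (X.erase p) = insert q (X ∩ Y) := by
  rw [inter_insert_of_mem hq, inter_erase, inter_comm Y X,
    erase_eq_of_notMem fun h => hp (mem_inter.mp h).2]

theorem exists_card_eq_le_card_inter_card_inter_eq [Fintype α] {X Y : Finset α} {n k m : ℕ}
    (hk : k ≤ #(X ∩ Y)) (hm : m ≤ #(X \ Y)) (hkm : k + m ≤ n) (hn : n ≤ k + #Yᶜ) :
    ∃ Z : Finset α, #Z = n ∧ k + m ≤ #(X ∩ Z) ∧ #(Y ∩ Z) = k := by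
  obtain ⟨S, hS, rfl⟩ := exists_subset_card_eq hk
  obtain ⟨T, hT, rfl⟩ := exists_subset_card_eq hm
  obtain ⟨hSX, hSY⟩ := subset_inter_iff.mp hS
  obtain ⟨hTX, hTY⟩ := subset_sdiff.mp hT
  have card_ST : #(S ∪ T) = #S + #T := card_union_of_disjoint (hTY.symm.mono_left hSY)
  have card_SYc : #(S ∪ Yᶜ) = #S + #Yᶜ :=
    card_union_of_disjoint (disjoint_compl_right.mono_left hSY)
  obtain ⟨Z, hSTZ, hZ, card_Z⟩ := exists_subsuperset_card_eq
    (union_subset_union_right (le_compl_iff_disjoint_right.mpr hTY) : S ∪ T ⊆ S ∪ Yᶜ)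
    (card_ST.trans_le hkm) (hn.trans_eq card_SYc.symm)
  have inter_eq : Y ∩ Z = S := by
    apply (subset_inter hSY (subset_union_left.trans hSTZ)).antisymm'
    calc Y ∩ Z ⊆ Y ∩ (S ∪ Yᶜ) := inter_subset_inter_left hZ
      _ = S := by rw [inter_union_distrib_left, inter_compl, union_empty, inter_eq_right.mpr hSY]
  exact ⟨Z, card_Z, card_ST.symm.trans_le (card_le_card (subset_inter (union_subset hSX hTX) hSTZ)),
    congrArg card inter_eq⟩

/-- `c` is the coloring of the pairs of `n`-element subsets of `α` induced by the coloring `s` of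
the pairs of points. The value of `c X X` is left unconstrained when `3 ≤ n`. -/
structure IsInducedColoring_s12 (n : ℕ) (s : α → α → Color) (c : Finset α → Finset α → Color) :
    Prop where
  eq_b0 : ∀ X Y, #X = n → #Y = n → #(X ∩ Y) = 0 → c X Y = Color.b0
  eq_b1 : ∀ X Y, #X = n → #Y = n → #(X ∩ Y) = 1 → c X Y = Color.b1
  eq_splitting : ∀ X Y, #X = n → #Y = n → ∀ i j, i ≠ j → X ∩ Y = {i, j} → c X Y = s i j
  eq_r : ∀ X Y, #X = n → #Y = n → X ≠ Y → 3 ≤ #(X ∩ Y) → c X Y = Color.r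

variable {n : ℕ} {s : α → α → Color} {c : Finset α → Finset α → Color} {X Y : Finset α}
  {j k : Color}

namespace IsInducedColoring_s12

theorem blue_of_card_inter_eq_two (hc : IsInducedColoring_s12 n s c)
    (hs : ∀ i j, i ≠ j → s i j = Color.b0 ∨ s i j = Color.b1)
    (hX : #X = n) (hY : #Y = n) (hXY : #(X ∩ Y) = 2) : c X Y = Color.b0 ∨ c X Y = Color.b1 := by
  obtain ⟨i, j, hij, h⟩ := card_eq_two.mp hXY
  rw [hc.eq_splitting X Y hX hY i j hij h]
  exact hs i j hij

theorem needMet_r_r (hc : IsInducedColoring_s12 n s c) (hn : 4 ≤ n)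
    (hX : #X = n) (hY : #Y = n) (hXY : #(X ∩ Y) = 2) : NeedMet n c X Y Color.r Color.r := by
  obtain ⟨p, hp⟩ : (X \ Y).Nonempty := card_pos.mp (by grind)
  obtain ⟨q, hq⟩ : (Y \ X).Nonempty := card_pos.mp (by grind)
  rw [mem_sdiff] at hp hq
  have card_erase : #(X.erase p) = n - 1 := by rw [card_erase_of_mem hp.1, hX]
  have card_inter_X : #(X ∩ insert q (X.erase p)) = n - 1 := by
    rw [inter_insert_erase_self hq.2, card_erase]
  have card_inter_Y : #(Y ∩ insert q (X.erase p)) = 3 := by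
    rw [inter_insert_erase hp.2 hq.1, card_insert_of_notMem (by simp [hq.2]), hXY]
  generalize hZ : insert q (X.erase p) = Z at card_inter_X card_inter_Y
  have card_Z : #Z = n := by
    rw [← hZ, card_insert_of_notMem (by simp [hq.2]), card_erase]
    omega
  have hZX : Z ≠ X := by rintro rfl; rw [inter_self] at card_inter_X; omega
  have hZY : Z ≠ Y := by rintro rfl; rw [inter_self] at card_inter_Y; omega
  exact ⟨Z, card_Z, hZX, hZY, hc.eq_r X Z hX card_Z hZX.symm (by omega),
    hc.eq_r Y Z hY card_Z hZY.symm card_inter_Y.ge⟩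

variable [Fintype α]

theorem exists_eq_r_card_inter_eq (hc : IsInducedColoring_s12 n s c) (hn : 5 ≤ n)
    (hα : 2 * n ≤ Fintype.card α) (hX : #X = n) (hY : #Y = n) (hXY : #(X ∩ Y) = 2)
    {m : ℕ} (hm : m < 2) :
    ∃ Z : Finset α, #Z = n ∧ Z ≠ X ∧ Z ≠ Y ∧ c X Z = Color.r ∧ #(Y ∩ Z) = m := by
  have card_sdiff : #(X \ Y) + #(X ∩ Y) = #X := card_sdiff_add_card_inter X Y
  have card_compl : #Yᶜ = Fintype.card α - n := by rw [card_compl, hY]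
  obtain ⟨Z, hZ, hXZ, hYZ⟩ : ∃ Z : Finset α, #Z = n ∧ m + 3 ≤ #(X ∩ Z) ∧ #(Y ∩ Z) = m :=
    exists_card_eq_le_card_inter_card_inter_eq (by omega) (by omega) (by omega) (by omega)
  have hZX : Z ≠ X := by rintro rfl; rw [inter_comm] at hYZ; omega
  have hZY : Z ≠ Y := by rintro rfl; rw [inter_self] at hYZ; omega
  exact ⟨Z, hZ, hZX, hZY, hc.eq_r X Z hX hZ hZX.symm (by omega), hYZ⟩

theorem needMet_r_b0 (hc : IsInducedColoring_s12 n s c) (hn : 5 ≤ n) (hα : 2 * n ≤ Fintype.card α)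
    (hX : #X = n) (hY : #Y = n) (hXY : #(X ∩ Y) = 2) : NeedMet n c X Y Color.r Color.b0 := by
  obtain ⟨Z, hZ, hZX, hZY, hr, hYZ⟩ := hc.exists_eq_r_card_inter_eq hn hα hX hY hXY two_pos
  exact ⟨Z, hZ, hZX, hZY, hr, hc.eq_b0 Y Z hY hZ hYZ⟩

theorem needMet_r_b1 (hc : IsInducedColoring_s12 n s c) (hn : 5 ≤ n) (hα : 2 * n ≤ Fintype.card α)
    (hX : #X = n) (hY : #Y = n) (hXY : #(X ∩ Y) = 2) : NeedMet n c X Y Color.r Color.b1 := by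
  obtain ⟨Z, hZ, hZX, hZY, hr, hYZ⟩ := hc.exists_eq_r_card_inter_eq hn hα hX hY hXY one_lt_two
  exact ⟨Z, hZ, hZX, hZY, hr, hc.eq_b1 Y Z hY hZ hYZ⟩

end IsInducedColoring_s12

theorem two_edge_needs_met_general [Fintype α] (hn : 5 ≤ n) (hα : 2 * n ≤ Fintype.card α)
    (hs : ∀ i j, i ≠ j → s i j = Color.b0 ∨ s i j = Color.b1) (hc : IsInducedColoring_s12 n s c)
    (hX : #X = n) (hY : #Y = n) (hXY : #(X ∩ Y) = 2) (hM : M2 (c X Y, j, k)) :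
    NeedMet n c X Y j k := by
  have hYX : #(Y ∩ X) = 2 := by rwa [inter_comm]
  have blue_XY := hc.blue_of_card_inter_eq_two hs hX hY hXY
  match j, k with
  | .r, .r => exact hc.needMet_r_r (by omega) hX hY hXY
  | .r, .b0 => exact hc.needMet_r_b0 hn hα hX hY hXY
  | .r, .b1 => exact hc.needMet_r_b1 hn hα hX hY hXY
  | .b0, .r => exact (hc.needMet_r_b0 hn hα hY hX hYX).symm
  | .b1, .r => exact (hc.needMet_r_b1 hn hα hY hX hYX).symm
  | .b0, .b0 | .b0, .b1 | .b1, .b0 | .b1, .b1 => exact absurd ⟨blue_XY, by simp, by simp⟩ hM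

end

/-- (2-edge case) For 7-element subsets `X`, `Y` with `|X ∩ Y| = 2` (so `c(XY) = b_i`),
every need `(b_i, j, k) ∈ M₂` of the edge `XY` has a witness: a 7-element subset `Z`,
distinct from `X` and `Y`, with `c(XZ) = j` and `c(YZ) = k`. -/
theorem two_edge_needs_met
    -- `s` is a splitting coloring: symmetric with values in {b₀, b₁}
    (s : Fin 14 → Fin 14 → Color)
    (hssym : ∀ i j : Fin 14, i ≠ j → s i j = s j i)
    (hsblue : ∀ i j : Fin 14, i ≠ j → s i j = Color.b0 ∨ s i j = Color.b1)
    -- `s` has no monochromatic K₄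
    (hK4 : ¬ ∃ (b : Color) (W : Finset (Fin 14)), W.card = 4 ∧
      ∀ i ∈ W, ∀ j ∈ W, i ≠ j → s i j = b)
    -- `s` has no monochromatic K_{4,3}
    (hK43 : ¬ ∃ (b : Color) (A B : Finset (Fin 14)), Disjoint A B ∧ A.card = 4 ∧ B.card = 3 ∧
      ∀ i ∈ A, ∀ j ∈ B, s i j = b)
    -- `s` has no monochromatic K_{5,2}
    (hK52 : ¬ ∃ (b : Color) (A B : Finset (Fin 14)), Disjoint A B ∧ A.card = 5 ∧ B.card = 2 ∧
      ∀ i ∈ A, ∀ j ∈ B, s i j = b)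
    -- `c` is the coloring on 7-element subsets induced by `s`
    (c : Finset (Fin 14) → Finset (Fin 14) → Color)
    (hc0 : ∀ X Y : Finset (Fin 14), X.card = 7 → Y.card = 7 →
      (X ∩ Y).card = 0 → c X Y = Color.b0)
    (hc1 : ∀ X Y : Finset (Fin 14), X.card = 7 → Y.card = 7 →
      (X ∩ Y).card = 1 → c X Y = Color.b1)
    (hc2 : ∀ X Y : Finset (Fin 14), X.card = 7 → Y.card = 7 → ∀ i j : Fin 14, i ≠ j →
      X ∩ Y = {i, j} → c X Y = s i j)
    (hcr : ∀ X Y : Finset (Fin 14), X.card = 7 → Y.card = 7 → X ≠ Y →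
      3 ≤ (X ∩ Y).card → c X Y = Color.r)
    :
    ∀ X Y : Finset (Fin 14), X.card = 7 → Y.card = 7 → (X ∩ Y).card = 2 →
      ∀ j k : Color, M2 (c X Y, j, k) →
      ∃ Z : Finset (Fin 14), Z.card = 7 ∧ Z ≠ X ∧ Z ≠ Y ∧ c X Z = j ∧ c Y Z = k := by
  intro X Y hX hY hXY j k hM
  exact two_edge_needs_met_general (by norm_num) (by simp) hsblue ⟨hc0, hc1, hc2, hcr⟩ hX hY hXY hM
end

section
/- (3-edge case) Let s be a splitting coloring of P = {1,…,14} with no monochromatic K₄, no monochromatic K_{4,3}, and no monochromatic K_{5,2}, and let c be the induced coloring on 7-element subsets of P. Then for all 7-element subsets X, Y of P with |X ∩ Y| = 3 (so c(XY) = r) and every triple (r, j, k) ∈ M₂, there exists a 7-element subset Z of P, distinct from X and Y, with c(XZ) = j and c(YZ) = k. -/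
/-!
Whether `c X Z` and `c Y Z` take prescribed values depends only on `S = Z ∩ (X ∪ Y)`, and every
4-point `S ⊆ X ∪ Y` arises in this way, with `Z = S ∪ (X ∪ Y)ᶜ` since `X ∪ Y` misses three points.
To get red on both sides, let `S` contain three points of `X ∩ Y`. To get red on `X` and blue on
`Y`, let `S` consist of at most one point of `Y \ X` and at least three points of `X \ Y`. To get
blue on both sides, let `S` be a pair in `X \ Y` together with a pair in `Y \ X`: as these are
4-point sets and there is no monochromatic `K₄`, each of them has pairs of both blues.
-/

section

open Finset

/-- `s` has a monochromatic `K_m`: an `m`-element set on which `s` is constant off the diagonal. -/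
def HasMonoClique {α : Type*} (s : α → α → Color) (m : ℕ) : Prop :=
  ∃ (b : Color) (W : Finset α), #W = m ∧ ∀ i ∈ W, ∀ j ∈ W, i ≠ j → s i j = b

theorem exists_pair_eq_of_not_hasMonoClique {α : Type*} {s : α → α → Color} {m : ℕ}
    {W : Finset α} {k : Color}
    (hs : ∀ i j : α, i ≠ j → s i j = Color.b0 ∨ s i j = Color.b1) (hm : ¬ HasMonoClique s m)
    (hW : m ≤ #W) (hk : k ≠ Color.r) : ∃ i ∈ W, ∃ j ∈ W, i ≠ j ∧ s i j = k := by
  obtain ⟨V, hVW, hV⟩ := exists_subset_card_eq hW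
  by_contra! hne
  cases k with
  | r => exact hk rfl
  | b0 => exact hm ⟨Color.b1, V, hV, fun i hi j hj hij =>
      (hs i j hij).resolve_left (hne i (hVW hi) j (hVW hj) hij)⟩
  | b1 => exact hm ⟨Color.b0, V, hV, fun i hi j hj hij =>
      (hs i j hij).resolve_right (hne i (hVW hi) j (hVW hj) hij)⟩

variable {α : Type*} [DecidableEq α]

theorem exists_card_eq_and_inter_eq [Fintype α] {S U : Finset α} {n : ℕ} (hSU : S ⊆ U)
    (hSn : #S ≤ n) (hn : n ≤ #S + #Uᶜ) : ∃ Z : Finset α, #Z = n ∧ U ∩ Z = S := by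
  have hdisj : Disjoint S Uᶜ := disjoint_compl_right.mono_left hSU
  obtain ⟨Z, hSZ, hZS, hZ⟩ := exists_subsuperset_card_eq (subset_union_left (s₂ := Uᶜ)) hSn
    (by rwa [card_union_of_disjoint hdisj])
  refine ⟨Z, hZ, Subset.antisymm (fun x hx => ?_) (subset_inter hSU hSZ)⟩
  obtain ⟨hxU, hxZ⟩ := mem_inter.1 hx
  exact (mem_union.1 (hZS hxZ)).resolve_right (notMem_compl.2 hxU)

theorem inter_union_eq_left_of_subset_of_disjoint {X A B : Finset α} (hA : A ⊆ X)
    (hB : Disjoint X B) : X ∩ (A ∪ B) = A := by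
  rw [inter_union_distrib_left, inter_eq_right.2 hA, disjoint_iff_inter_eq_empty.1 hB, union_empty]

theorem exists_inter_eq_and_inter_eq {X Y A B : Finset α} (hA : A ⊆ X \ Y) (hB : B ⊆ Y \ X) :
    ∃ S ⊆ X ∪ Y, #S = #A + #B ∧ X ∩ S = A ∧ Y ∩ S = B := by
  obtain ⟨hAX, hAY⟩ := subset_sdiff.1 hA
  obtain ⟨hBY, hBX⟩ := subset_sdiff.1 hB
  refine ⟨A ∪ B, union_subset_union hAX hBY,
    card_union_of_disjoint (hAY.mono_right hBY),
    inter_union_eq_left_of_subset_of_disjoint hAX hBX.symm, ?_⟩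
  rw [union_comm, inter_union_eq_left_of_subset_of_disjoint hBY hAY.symm]

theorem exists_card_eq_and_le_card_inter {X Y : Finset α} {t m : ℕ} (hI : t ≤ #(X ∩ Y))
    (htm : t ≤ m) (hm : m ≤ #(X ∪ Y)) : ∃ S ⊆ X ∪ Y, #S = m ∧ t ≤ #(X ∩ S) ∧ t ≤ #(Y ∩ S) := by
  obtain ⟨T, hT, rfl⟩ := exists_subset_card_eq hI
  obtain ⟨hTX, hTY⟩ := subset_inter_iff.1 hT
  obtain ⟨S, hTS, hSU, hS⟩ := exists_subsuperset_card_eq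
    (hTX.trans (subset_union_left (s₂ := Y))) htm hm
  exact ⟨S, hSU, hS, card_le_card (subset_inter hTX hTS), card_le_card (subset_inter hTY hTS)⟩

/-- `TraceColor s I k` says that `k` is the color which the coloring induced by `s` gives to pairs
of sets with intersection `I`. It is a relation because a pair `{i, j}` has both
colors `s i j` and `s j i`. -/
inductive TraceColor (s : α → α → Color) : Finset α → Color → Prop
  | empty : TraceColor s ∅ Color.b0
  | singleton (i : α) : TraceColor s {i} Color.b1
  | pair {i j : α} (hij : i ≠ j) : TraceColor s {i, j} (s i j)
  | red {I : Finset α} (hI : 3 ≤ #I) : TraceColor s I Color.r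

/-- `c` is a coloring of the pairs of `n`-element sets induced by `s`; its values on sets of other
sizes are arbitrary. -/
structure IsInducedColoring_s13 (n : ℕ) (s : α → α → Color)
    (c : Finset α → Finset α → Color) : Prop where
  eq_b0 : ∀ X Y : Finset α, #X = n → #Y = n → #(X ∩ Y) = 0 → c X Y = Color.b0
  eq_b1 : ∀ X Y : Finset α, #X = n → #Y = n → #(X ∩ Y) = 1 → c X Y = Color.b1
  eq_pair : ∀ X Y : Finset α, #X = n → #Y = n → ∀ i j : α, i ≠ j → X ∩ Y = {i, j} →
    c X Y = s i j
  eq_r : ∀ X Y : Finset α, #X = n → #Y = n → X ≠ Y → 3 ≤ #(X ∩ Y) → c X Y = Color.r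

variable {s : α → α → Color}

theorem IsInducedColoring_s13.eq_of_traceColor {n : ℕ} {c : Finset α → Finset α → Color}
    (hc : IsInducedColoring_s13 n s c) {X Y I : Finset α} {k : Color} (hX : #X = n) (hY : #Y = n)
    (hne : X ≠ Y) (hI : X ∩ Y = I) (hk : TraceColor s I k) : c X Y = k := by
  cases hk with
  | empty => exact hc.eq_b0 X Y hX hY (by rw [hI, card_empty])
  | singleton i => exact hc.eq_b1 X Y hX hY (by rw [hI, card_singleton])
  | pair hij => exact hc.eq_pair X Y hX hY _ _ hij hI
  | red h => exact hc.eq_r X Y hX hY hne (hI ▸ h)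

theorem exists_subset_card_eq_two_traceColor {m : ℕ} {W : Finset α} {k : Color}
    (hs : ∀ i j : α, i ≠ j → s i j = Color.b0 ∨ s i j = Color.b1) (hm : ¬ HasMonoClique s m)
    (hW : m ≤ #W) (hk : k ≠ Color.r) : ∃ A ⊆ W, #A = 2 ∧ TraceColor s A k := by
  obtain ⟨i, hi, j, hj, hij, rfl⟩ := exists_pair_eq_of_not_hasMonoClique hs hm hW hk
  exact ⟨{i, j}, insert_subset hi (singleton_subset_iff.2 hj), card_pair hij, .pair hij⟩

theorem exists_subset_card_le_one_traceColor (s : α → α → Color) {W : Finset α} {k : Color}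
    (hW : W.Nonempty) (hk : k ≠ Color.r) : ∃ A ⊆ W, #A ≤ 1 ∧ TraceColor s A k := by
  cases k with
  | r => exact absurd rfl hk
  | b0 => exact ⟨∅, empty_subset W, by simp, .empty⟩
  | b1 =>
    obtain ⟨i, hi⟩ := hW
    exact ⟨{i}, singleton_subset_iff.2 hi, (card_singleton i).le, .singleton i⟩

theorem exists_traceColor_red_blue (s : α → α → Color) {X Y : Finset α} {k : Color}
    (hXY : 4 ≤ #(X \ Y)) (hYX : (Y \ X).Nonempty) (hk : k ≠ Color.r) :
    ∃ S ⊆ X ∪ Y, #S = 4 ∧ TraceColor s (X ∩ S) Color.r ∧ TraceColor s (Y ∩ S) k := by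
  obtain ⟨B, hB, hB1, hBk⟩ := exists_subset_card_le_one_traceColor s hYX hk
  obtain ⟨A, hA, hA4⟩ : ∃ A ⊆ X \ Y, #A = 4 - #B := exists_subset_card_eq (by lia)
  obtain ⟨S, hS, hS4, hXS, hYS⟩ := exists_inter_eq_and_inter_eq hA hB
  exact ⟨S, hS, by lia, .red (by lia), hYS ▸ hBk⟩

theorem exists_traceColor_blue_blue {X Y : Finset α} {j k : Color}
    (hs : ∀ i j : α, i ≠ j → s i j = Color.b0 ∨ s i j = Color.b1) (hK4 : ¬ HasMonoClique s 4)
    (hXY : 4 ≤ #(X \ Y)) (hYX : 4 ≤ #(Y \ X)) (hj : j ≠ Color.r) (hk : k ≠ Color.r) :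
    ∃ S ⊆ X ∪ Y, #S = 4 ∧ TraceColor s (X ∩ S) j ∧ TraceColor s (Y ∩ S) k := by
  obtain ⟨A, hA, hA2, hAj⟩ := exists_subset_card_eq_two_traceColor hs hK4 hXY hj
  obtain ⟨B, hB, hB2, hBk⟩ := exists_subset_card_eq_two_traceColor hs hK4 hYX hk
  obtain ⟨S, hS, hS4, hXS, hYS⟩ := exists_inter_eq_and_inter_eq hA hB
  exact ⟨S, hS, by lia, hXS ▸ hAj, hYS ▸ hBk⟩

theorem exists_traceColor_and_traceColor {X Y : Finset α}
    (hs : ∀ i j : α, i ≠ j → s i j = Color.b0 ∨ s i j = Color.b1) (hK4 : ¬ HasMonoClique s 4)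
    (hI : 3 ≤ #(X ∩ Y)) (hXY : 4 ≤ #(X \ Y)) (hYX : 4 ≤ #(Y \ X)) (j k : Color) :
    ∃ S ⊆ X ∪ Y, #S = 4 ∧ TraceColor s (X ∩ S) j ∧ TraceColor s (Y ∩ S) k := by
  by_cases hj : j = Color.r <;> by_cases hk : k = Color.r
  · subst hj hk
    have hU : 4 ≤ #(X ∪ Y) := hXY.trans (card_le_card (sdiff_subset.trans subset_union_left))
    obtain ⟨S, hS, hS4, hXS, hYS⟩ := exists_card_eq_and_le_card_inter hI (by lia) hU
    exact ⟨S, hS, hS4, .red hXS, .red hYS⟩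
  · subst hj
    exact exists_traceColor_red_blue s hXY (card_pos.1 (by lia)) hk
  · subst hk
    obtain ⟨S, hS, hS4, hYS, hXS⟩ :=
      exists_traceColor_red_blue s hYX (card_pos.1 (by lia)) hj
    exact ⟨S, union_comm Y X ▸ hS, hS4, hXS, hYS⟩
  · exact exists_traceColor_blue_blue hs hK4 hXY hYX hj hk

theorem three_edge_needs_met_general [Fintype α] {n : ℕ} {c : Finset α → Finset α → Color}
    (hs : ∀ i j : α, i ≠ j → s i j = Color.b0 ∨ s i j = Color.b1) (hK4 : ¬ HasMonoClique s 4)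
    (hc : IsInducedColoring_s13 n s c) {X Y : Finset α} (hX : #X = n) (hY : #Y = n)
    (hI : 3 ≤ #(X ∩ Y)) (hn : #(X ∩ Y) + 4 ≤ n) (hα : 3 * n ≤ Fintype.card α + #(X ∩ Y) + 4)
    (j k : Color) :
    ∃ Z : Finset α, #Z = n ∧ Z ≠ X ∧ Z ≠ Y ∧ c X Z = j ∧ c Y Z = k := by
  have hXY : 4 ≤ #(X \ Y) := by
    have := card_sdiff_add_card_inter X Y
    lia
  have hYX : 4 ≤ #(Y \ X) := by
    have := card_sdiff_add_card_inter Y X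
    rw [inter_comm] at this
    lia
  have hout : n ≤ 4 + #(X ∪ Y)ᶜ := by
    have := card_union_add_card_inter X Y
    have := card_add_card_compl (X ∪ Y)
    lia
  obtain ⟨S, hSU, hS4, hXS, hYS⟩ := exists_traceColor_and_traceColor hs hK4 hI hXY hYX j k
  obtain ⟨Z, hZ, hUZ⟩ := exists_card_eq_and_inter_eq hSU (by lia) (hS4 ▸ hout)
  have inter_eq : ∀ W ⊆ X ∪ Y, W ∩ Z = W ∩ S := fun W hW => by
    rw [← hUZ, ← inter_assoc, inter_eq_left.2 hW]
  have ne_of_subset : ∀ W ⊆ X ∪ Y, W ≠ Z := by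
    rintro W hW rfl
    have := card_le_card (inter_eq W hW ▸ inter_subset_right : W ∩ W ⊆ S)
    rw [inter_self] at this
    lia
  have hXZ := ne_of_subset X subset_union_left
  have hYZ := ne_of_subset Y subset_union_right
  exact ⟨Z, hZ, hXZ.symm, hYZ.symm,
    hc.eq_of_traceColor hX hZ hXZ (inter_eq X subset_union_left) hXS,
    hc.eq_of_traceColor hY hZ hYZ (inter_eq Y subset_union_right) hYS⟩

end

/-- (3-edge case) For 7-element subsets `X`, `Y` with `|X ∩ Y| = 3` (so `c(XY) = r`),
every need `(r, j, k) ∈ M₂` of the edge `XY` has a witness: a 7-element subset `Z`,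
distinct from `X` and `Y`, with `c(XZ) = j` and `c(YZ) = k`. -/
theorem three_edge_needs_met
    -- `s` is a splitting coloring: symmetric with values in {b₀, b₁}
    (s : Fin 14 → Fin 14 → Color)
    (hssym : ∀ i j : Fin 14, i ≠ j → s i j = s j i)
    (hsblue : ∀ i j : Fin 14, i ≠ j → s i j = Color.b0 ∨ s i j = Color.b1)
    -- `s` has no monochromatic K₄
    (hK4 : ¬ ∃ (b : Color) (W : Finset (Fin 14)), W.card = 4 ∧
      ∀ i ∈ W, ∀ j ∈ W, i ≠ j → s i j = b)
    -- `s` has no monochromatic K_{4,3}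
    (hK43 : ¬ ∃ (b : Color) (A B : Finset (Fin 14)), Disjoint A B ∧ A.card = 4 ∧ B.card = 3 ∧
      ∀ i ∈ A, ∀ j ∈ B, s i j = b)
    -- `s` has no monochromatic K_{5,2}
    (hK52 : ¬ ∃ (b : Color) (A B : Finset (Fin 14)), Disjoint A B ∧ A.card = 5 ∧ B.card = 2 ∧
      ∀ i ∈ A, ∀ j ∈ B, s i j = b)
    -- `c` is the coloring on 7-element subsets induced by `s`
    (c : Finset (Fin 14) → Finset (Fin 14) → Color)
    (hc0 : ∀ X Y : Finset (Fin 14), X.card = 7 → Y.card = 7 →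
      (X ∩ Y).card = 0 → c X Y = Color.b0)
    (hc1 : ∀ X Y : Finset (Fin 14), X.card = 7 → Y.card = 7 →
      (X ∩ Y).card = 1 → c X Y = Color.b1)
    (hc2 : ∀ X Y : Finset (Fin 14), X.card = 7 → Y.card = 7 → ∀ i j : Fin 14, i ≠ j →
      X ∩ Y = {i, j} → c X Y = s i j)
    (hcr : ∀ X Y : Finset (Fin 14), X.card = 7 → Y.card = 7 → X ≠ Y →
      3 ≤ (X ∩ Y).card → c X Y = Color.r)
    :
    ∀ X Y : Finset (Fin 14), X.card = 7 → Y.card = 7 → (X ∩ Y).card = 3 →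
      ∀ j k : Color, M2 (Color.r, j, k) →
      ∃ Z : Finset (Fin 14), Z.card = 7 ∧ Z ≠ X ∧ Z ≠ Y ∧ c X Z = j ∧ c Y Z = k := by
  intro X Y hX hY hI j k _
  exact three_edge_needs_met_general hsblue hK4 ⟨hc0, hc1, hc2, hcr⟩ hX hY hI.ge (by lia)
    (by simp [hI]) j k
end
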